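/- arXiv:2312.03778 — 3 statements merged into one kernel-verified Lean document; each statement's English description precedes it below -/
import Mathlib

section
/- Let q ∈ (1,2] and let A and B be n×n positive semidefinite Hermitian matrices. Then Tr[exp_q(A + B)] ≤ Tr[exp_q(A) exp_q(B)]. -/
open Matrix ComplexOrder

/-- Matrix logarithm of a (positive definite) Hermitian matrix, via functional calculus. -/
noncomputable def mlog {n : ℕ} (A : Matrix (Fin n) (Fin n) ℂ) : Matrix (Fin n) (Fin n) ℂ :=
  cfc Real.log A

/-- Matrix exponential of a Hermitian matrix, via functional calculus. -/
noncomputable def mexp {n : ℕ} (A : Matrix (Fin n) (Fin n) ℂ) : Matrix (Fin n) (Fin n) ℂ :=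
  cfc Real.exp A

/-- Real power of a (positive definite) Hermitian matrix, via functional calculus. -/
noncomputable def mpow {n : ℕ} (A : Matrix (Fin n) (Fin n) ℂ) (p : ℝ) : Matrix (Fin n) (Fin n) ℂ :=
  cfc (fun x : ℝ => x ^ p) A

/-- Deformed logarithm `log_q x = (x^(q-1) - 1)/(q-1)`. -/
noncomputable def logq (q x : ℝ) : ℝ := (x ^ (q - 1) - 1) / (q - 1)

/-- Deformed exponential `exp_q x = (1 + (q-1)x)^(1/(q-1))`, with `exp_1 = exp`. -/
noncomputable def expq (q x : ℝ) : ℝ :=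
  if q = 1 then Real.exp x else (1 + (q - 1) * x) ^ (1 / (q - 1))

/-- Deformed logarithm of a positive definite matrix, via functional calculus. -/
noncomputable def mlogq {n : ℕ} (q : ℝ) (A : Matrix (Fin n) (Fin n) ℂ) :
    Matrix (Fin n) (Fin n) ℂ :=
  cfc (logq q) A

/-- Deformed exponential of a Hermitian matrix, via functional calculus. -/
noncomputable def mexpq {m : ℕ} (q : ℝ) (A : Matrix (Fin m) (Fin m) ℂ) :
    Matrix (Fin m) (Fin m) ℂ :=
  cfc (expq q) A

/-- Real part of the trace. -/
noncomputable def trRe {n : ℕ} (M : Matrix (Fin n) (Fin n) ℂ) : ℝ := (Matrix.trace M).re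

/-- The reduced relative entropy `S_H(A | B) = Tr[A log A - H* A H log B - A + B]`. -/
noncomputable def SH {n : ℕ} (H A B : Matrix (Fin n) (Fin n) ℂ) : ℝ :=
  trRe (A * mlog A - Hᴴ * A * H * mlog B - A + B)

/-- The reduced Tsallis relative entropy
`S_{H,q}(A | B) = Tr[A^(2-q) log_q A - H* A^(2-q) H log_q B - A + B]`. -/
noncomputable def STq {n : ℕ} (H : Matrix (Fin n) (Fin n) ℂ) (q : ℝ)
    (A B : Matrix (Fin n) (Fin n) ℂ) : ℝ :=
  trRe (mpow A (2 - q) * mlogq q A - Hᴴ * mpow A (2 - q) * H * mlogq q B - A + B)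


section RpowTangent

open MeasureTheory Set

/-- The pointwise derivative of `x ↦ Real.rpowIntegrand₀₁ s t x`. -/
noncomputable def rpowIntegrandDeriv (s t x : ℝ) : ℝ := t ^ s / (t + x) ^ 2

lemma rpowIntegrand_le_tangent {s t x y : ℝ} (ht : 0 < t)
    (hx : 0 < x) (hy : 0 < y) :
    Real.rpowIntegrand₀₁ s t y ≤
      Real.rpowIntegrand₀₁ s t x + rpowIntegrandDeriv s t x * (y - x) := by
  have h : Real.rpowIntegrand₀₁ s t x + rpowIntegrandDeriv s t x * (y - x) -
      Real.rpowIntegrand₀₁ s t y = t ^ s * ((y - x) ^ 2 / ((t + x) ^ 2 * (t + y))) := by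
    unfold Real.rpowIntegrand₀₁ rpowIntegrandDeriv
    field_simp
    ring
  have : 0 ≤ t ^ s * ((y - x) ^ 2 / ((t + x) ^ 2 * (t + y))) := by positivity
  linarith

lemma integrableOn_rpowIntegrandDeriv {s x : ℝ} {μ : Measure ℝ}
    (hx : 0 < x) (h : IntegrableOn (fun t => Real.rpowIntegrand₀₁ s t x) (Ioi 0) μ) :
    IntegrableOn (fun t => rpowIntegrandDeriv s t x) (Ioi 0) μ := by
  refine Integrable.mono' (h.const_mul x⁻¹) ?_ ?_
  · unfold rpowIntegrandDeriv
    exact Measurable.aestronglyMeasurable (by fun_prop)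
  · filter_upwards [ae_restrict_mem measurableSet_Ioi] with t ht
    have ht : 0 < t := ht
    have hnn : 0 ≤ rpowIntegrandDeriv s t x := by unfold rpowIntegrandDeriv; positivity
    rw [Real.norm_of_nonneg hnn]
    have h : x⁻¹ * Real.rpowIntegrand₀₁ s t x - rpowIntegrandDeriv s t x =
        t ^ s * (x / (t * (t + x) ^ 2)) := by
      unfold Real.rpowIntegrand₀₁ rpowIntegrandDeriv
      field_simp
      ring
    have : 0 ≤ t ^ s * (x / (t * (t + x) ^ 2)) := by positivity
    linarith

lemma integral_rpowIntegrandDeriv {s x : ℝ} {μ : Measure ℝ}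
    (hx : 0 < x)
    (hμ : ∀ y ∈ Ici (0 : ℝ), IntegrableOn (fun t => Real.rpowIntegrand₀₁ s t y) (Ioi 0) μ ∧
      y ^ s = ∫ t in Ioi 0, Real.rpowIntegrand₀₁ s t y ∂μ) :
    ∫ t in Ioi 0, rpowIntegrandDeriv s t x ∂μ = s * x ^ (s - 1) := by
  set I := ∫ t in Ioi 0, rpowIntegrandDeriv s t x ∂μ with hI
  have hG := integrableOn_rpowIntegrandDeriv hx (hμ x hx.le).1
  have key : ∀ y, 0 < y → y ^ s ≤ x ^ s + I * (y - x) := by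
    intro y hy
    rw [(hμ y hy.le).2, (hμ x hx.le).2, hI, ← integral_mul_const,
      ← integral_add (hμ x hx.le).1 (hG.mul_const _)]
    refine setIntegral_mono_on (hμ y hy.le).1 ((hμ x hx.le).1.add (hG.mul_const _))
      measurableSet_Ioi fun t ht => rpowIntegrand_le_tangent ht hx hy
  have hmax : IsLocalMax (fun y : ℝ => y ^ s - I * (y - x)) x := by
    filter_upwards [lt_mem_nhds hx] with y hy
    have := key y hy
    simp only [sub_self, mul_zero, sub_zero]
    linarith
  have hd : HasDerivAt (fun y : ℝ => y ^ s - I * (y - x)) (s * x ^ (s - 1) - I * 1) x :=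
    (Real.hasDerivAt_rpow_const (Or.inl hx.ne')).sub (((hasDerivAt_id x).sub_const x).const_mul I)
  have := hmax.hasDerivAt_eq_zero hd
  linarith

end RpowTangent

section UnitarySums

variable {n : Type*} [Fintype n] [DecidableEq n]

lemma sum_normSq_mul_unitary_right (P : Matrix n n ℂ) {N : Matrix n n ℂ} (hN : N * Nᴴ = 1)
    (i : n) : ∑ j, Complex.normSq ((P * N) i j) = ∑ k, Complex.normSq (P i k) := by
  have row : ∀ Q : Matrix n n ℂ, ((∑ j, Complex.normSq (Q i j) : ℝ) : ℂ) = (Q * Qᴴ) i i := by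
    intro Q
    simp [Matrix.mul_apply, Complex.mul_conj]
  have : (P * N) * (P * N)ᴴ = P * Pᴴ := by
    rw [conjTranspose_mul, Matrix.mul_assoc, ← Matrix.mul_assoc N, hN, Matrix.one_mul]
  exact_mod_cast (row (P * N)).trans ((congrFun₂ this i i).trans (row P).symm)

lemma sum_normSq_mul_unitary_left (P : Matrix n n ℂ) {M : Matrix n n ℂ} (hM : Mᴴ * M = 1)
    (j : n) : ∑ i, Complex.normSq ((M * P) i j) = ∑ k, Complex.normSq (P k j) := by
  have h := sum_normSq_mul_unitary_right Pᴴ (N := Mᴴ) (by simpa using hM) j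
  rw [← conjTranspose_mul] at h
  simpa [conjTranspose_apply] using h

lemma sum_normSq_row_unitary {N : Matrix n n ℂ} (hN : N * Nᴴ = 1) (i : n) :
    ∑ j, Complex.normSq (N i j) = 1 := by
  have := sum_normSq_mul_unitary_right 1 hN i
  simpa [Matrix.one_apply, apply_ite Complex.normSq] using this

lemma sum_normSq_col_unitary {M : Matrix n n ℂ} (hM : Mᴴ * M = 1) (j : n) :
    ∑ i, Complex.normSq (M i j) = 1 := by
  have := sum_normSq_mul_unitary_left 1 hM j
  simpa [Matrix.one_apply, apply_ite Complex.normSq] using this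

lemma parallel_sum_mul_normSq_add_le {α β : ℝ} (hα : 0 < α) (hβ : 0 < β) (a b : ℂ) :
    α * β / (α + β) * Complex.normSq (a + b) ≤ α * Complex.normSq a + β * Complex.normSq b := by
  rw [div_mul_eq_mul_div, div_le_iff₀ (by positivity)]
  simp only [Complex.normSq_apply, Complex.add_re, Complex.add_im]
  nlinarith [sq_nonneg (α * a.re - β * b.re), sq_nonneg (α * a.im - β * b.im)]

lemma sum_parallel_sum_le {M N : Matrix n n ℂ} (hM : Mᴴ * M = 1) (hN : N * Nᴴ = 1)
    {w y a b : n → ℝ} (hw : ∀ i, 0 < w i) (hy : ∀ j, 0 < y j) (hab : ∀ k, a k + b k = 1) :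
    ∑ i, ∑ j, w i * y j / (w i + y j) * Complex.normSq ((M * N) i j) ≤
      ∑ i, ∑ k, w i * a k ^ 2 * Complex.normSq (M i k) +
        ∑ k, ∑ j, y j * b k ^ 2 * Complex.normSq (N k j) := by
  set Da : Matrix n n ℂ := diagonal fun k => (a k : ℂ)
  set Db : Matrix n n ℂ := diagonal fun k => (b k : ℂ)
  have hD : Da + Db = 1 := by
    rw [diagonal_add, ← diagonal_one]
    congr 1
    ext k
    exact_mod_cast hab k
  have hsplit : M * N = M * Da * N + M * (Db * N) := by
    rw [← Matrix.mul_assoc, ← Matrix.add_mul, ← Matrix.mul_add, hD, Matrix.mul_one]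
  have h1 : ∀ i, ∑ j, Complex.normSq ((M * Da * N) i j) =
      ∑ k, a k ^ 2 * Complex.normSq (M i k) := by
    intro i
    rw [sum_normSq_mul_unitary_right _ hN]
    exact Finset.sum_congr rfl fun k _ => by
      rw [mul_diagonal, Complex.normSq_mul, Complex.normSq_ofReal]; ring
  have h2 : ∀ j, ∑ i, Complex.normSq ((M * (Db * N)) i j) =
      ∑ k, b k ^ 2 * Complex.normSq (N k j) := by
    intro j
    rw [sum_normSq_mul_unitary_left _ hM]
    exact Finset.sum_congr rfl fun k _ => by
      rw [diagonal_mul, Complex.normSq_mul, Complex.normSq_ofReal]; ring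
  calc _ ≤ ∑ i, ∑ j, (w i * Complex.normSq ((M * Da * N) i j) +
        y j * Complex.normSq ((M * (Db * N)) i j)) := by
        refine Finset.sum_le_sum fun i _ => Finset.sum_le_sum fun j _ => ?_
        rw [hsplit, Matrix.add_apply]
        exact parallel_sum_mul_normSq_add_le (hw i) (hy j) _ _
    _ = _ := by
        simp_rw [Finset.sum_add_distrib]
        congr 1
        · simp_rw [← Finset.mul_sum, h1, Finset.mul_sum, mul_assoc]
        · rw [Finset.sum_comm]
          simp_rw [← Finset.mul_sum, h2, Finset.mul_sum, mul_assoc]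
          rw [Finset.sum_comm]

end UnitarySums

section LiebTangent

open MeasureTheory Set

variable {n : Type*} [Fintype n] [DecidableEq n]

lemma sum_rpowIntegrand_le {s t : ℝ} (ht : 0 < t)
    {M N : Matrix n n ℂ} (hM : Mᴴ * M = 1) (hN : N * Nᴴ = 1)
    {w x y : n → ℝ} (hw : ∀ i, 0 < w i) (hx : ∀ k, 0 < x k) (hy : ∀ j, 0 < y j) :
    ∑ i, ∑ j, y j * Complex.normSq ((M * N) i j) * Real.rpowIntegrand₀₁ s t (w i / y j) ≤
      ∑ i, ∑ k, w i * Complex.normSq (M i k) * rpowIntegrandDeriv s t (x k) +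
        ∑ k, ∑ j, y j * Complex.normSq (N k j) *
          (Real.rpowIntegrand₀₁ s t (x k) - x k * rpowIntegrandDeriv s t (x k)) := by
  have h := sum_parallel_sum_le hM hN hw (fun j => mul_pos ht (hy j))
    (a := fun k => t / (t + x k)) (b := fun k => x k / (t + x k)) (fun k => by
      have := hx k
      field_simp)
  have h := mul_le_mul_of_nonneg_left h (show 0 ≤ t ^ s / t ^ 2 by positivity)
  rw [mul_add] at h
  simp_rw [Finset.mul_sum] at h
  refine le_of_eq_of_le ?_ (h.trans_eq (congrArg₂ _ ?_ ?_)) <;>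
    refine Finset.sum_congr rfl fun i _ => Finset.sum_congr rfl fun j _ => ?_
  · have := hw i; have := hy j
    unfold Real.rpowIntegrand₀₁
    field_simp
    ring
  · have := hw i; have := hx j
    unfold rpowIntegrandDeriv
    field_simp
  · have := hx i; have := hy j
    unfold Real.rpowIntegrand₀₁ rpowIntegrandDeriv
    field_simp
    ring

/-- The tangent inequality at `(x, 1)` of the jointly concave function
`(W, Y) ↦ Tr (W ^ s * Y ^ (1 - s))`, written in eigenbases. -/
lemma sum_rpow_mul_rpow_le {s : ℝ} (hs : s ∈ Ico (0 : ℝ) 1)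
    {M N : Matrix n n ℂ} (hM : Mᴴ * M = 1) (hN : N * Nᴴ = 1)
    {w x y : n → ℝ} (hw : ∀ i, 0 < w i) (hx : ∀ k, 0 < x k) (hy : ∀ j, 0 < y j) :
    ∑ i, ∑ j, w i ^ s * y j ^ (1 - s) * Complex.normSq ((M * N) i j) ≤
      ∑ i, ∑ k, s * w i * x k ^ (s - 1) * Complex.normSq (M i k) +
        ∑ k, ∑ j, (1 - s) * x k ^ s * y j * Complex.normSq (N k j) := by
  rcases hs.1.eq_or_lt with rfl | hs0
  · simp only [Real.rpow_zero, sub_zero, Real.rpow_one, zero_mul, Finset.sum_const_zero, zero_add,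
      one_mul]
    rw [Finset.sum_comm, Finset.sum_comm (f := fun k j => y j * Complex.normSq (N k j))]
    refine (Finset.sum_congr rfl fun j _ => ?_).le
    rw [← Finset.mul_sum, ← Finset.mul_sum, sum_normSq_mul_unitary_left N hM]
  have hs' : s ∈ Ioo (0 : ℝ) 1 := ⟨hs0, hs.2⟩
  obtain ⟨μ, hμ⟩ := Real.exists_measure_rpow_eq_integral_rpowIntegrand₀₁ hs'
  have hK : ∀ v, 0 < v → IntegrableOn (fun t => Real.rpowIntegrand₀₁ s t v) (Ioi 0) μ :=
    fun v hv => (hμ v hv.le).1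
  have hG : ∀ v, 0 < v → IntegrableOn (fun t => rpowIntegrandDeriv s t v) (Ioi 0) μ :=
    fun v hv => integrableOn_rpowIntegrandDeriv hv (hK v hv)
  have i1 : ∀ i j, IntegrableOn (fun t => y j * Complex.normSq ((M * N) i j) *
      Real.rpowIntegrand₀₁ s t (w i / y j)) (Ioi 0) μ :=
    fun i j => (hK _ (div_pos (hw i) (hy j))).const_mul _
  have i2 : ∀ i k, IntegrableOn (fun t => w i * Complex.normSq (M i k) *
      rpowIntegrandDeriv s t (x k)) (Ioi 0) μ := fun i k => (hG _ (hx k)).const_mul _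
  have i3 : ∀ k, IntegrableOn (fun t => Real.rpowIntegrand₀₁ s t (x k) -
      x k * rpowIntegrandDeriv s t (x k)) (Ioi 0) μ :=
    fun k => (hK _ (hx k)).sub ((hG _ (hx k)).const_mul _)
  have i4 : ∀ k j, IntegrableOn (fun t => y j * Complex.normSq (N k j) *
      (Real.rpowIntegrand₀₁ s t (x k) - x k * rpowIntegrandDeriv s t (x k))) (Ioi 0) μ :=
    fun k j => (i3 k).const_mul _
  have s1 := integrable_finsetSum Finset.univ fun i _ =>
    integrable_finsetSum Finset.univ fun j _ => i1 i j
  have s2 := integrable_finsetSum Finset.univ fun i _ =>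
    integrable_finsetSum Finset.univ fun k _ => i2 i k
  have s4 := integrable_finsetSum Finset.univ fun k _ =>
    integrable_finsetSum Finset.univ fun j _ => i4 k j
  have h := setIntegral_mono_on s1 (s2.add s4) measurableSet_Ioi
    fun t ht => sum_rpowIntegrand_le ht hM hN hw hx hy
  simp only [Pi.add_apply] at h
  rw [integral_add s2 s4,
    integral_finsetSum _ fun i _ => integrable_finsetSum Finset.univ fun j _ => i1 i j,
    integral_finsetSum _ fun i _ => integrable_finsetSum Finset.univ fun j _ => i2 i j,
    integral_finsetSum _ fun i _ => integrable_finsetSum Finset.univ fun j _ => i4 i j] at h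
  simp_rw [integral_finsetSum _ fun j _ => i1 _ j, integral_finsetSum _ fun j _ => i2 _ j,
    integral_finsetSum _ fun j _ => i4 _ j, integral_const_mul] at h
  refine le_of_eq_of_le ?_ (h.trans_eq (congrArg₂ _ ?_ ?_)) <;>
    refine Finset.sum_congr rfl fun i _ => Finset.sum_congr rfl fun j _ => ?_
  · rw [← (hμ _ (div_pos (hw i) (hy j)).le).2, Real.div_rpow (hw i).le (hy j).le,
      Real.rpow_sub (hy j), Real.rpow_one]
    ring
  · rw [integral_rpowIntegrandDeriv (hx j) hμ]
    ring
  · rw [integral_sub (hK _ (hx i)) ((hG _ (hx i)).const_mul _), integral_const_mul,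
      integral_rpowIntegrandDeriv (hx i) hμ, ← (hμ _ (hx i).le).2,
      Real.rpow_sub (hx i), Real.rpow_one]
    have := hx i
    field_simp

end LiebTangent

section Eigenbasis

variable {n : ℕ} {A B : Matrix (Fin n) (Fin n) ℂ}

/-- The unitary change of basis between the eigenbases of two Hermitian matrices. -/
noncomputable def eigenOverlap (hA : A.IsHermitian) (hB : B.IsHermitian) :
    Matrix (Fin n) (Fin n) ℂ :=
  (hA.eigenvectorUnitary : Matrix (Fin n) (Fin n) ℂ)ᴴ * hB.eigenvectorUnitary

lemma eigenvectorUnitary_mul_conjTranspose (hA : A.IsHermitian) :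
    (hA.eigenvectorUnitary : Matrix (Fin n) (Fin n) ℂ) *
      (hA.eigenvectorUnitary : Matrix (Fin n) (Fin n) ℂ)ᴴ = 1 :=
  Unitary.coe_mul_star_self hA.eigenvectorUnitary

lemma conjTranspose_mul_eigenvectorUnitary (hA : A.IsHermitian) :
    (hA.eigenvectorUnitary : Matrix (Fin n) (Fin n) ℂ)ᴴ *
      (hA.eigenvectorUnitary : Matrix (Fin n) (Fin n) ℂ) = 1 :=
  Unitary.coe_star_mul_self hA.eigenvectorUnitary

lemma eigenOverlap_mul_eigenOverlap {C : Matrix (Fin n) (Fin n) ℂ} (hA : A.IsHermitian)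
    (hB : B.IsHermitian) (hC : C.IsHermitian) :
    eigenOverlap hA hB * eigenOverlap hB hC = eigenOverlap hA hC := by
  unfold eigenOverlap
  rw [Matrix.mul_assoc, ← Matrix.mul_assoc _ _ (hC.eigenvectorUnitary : Matrix (Fin n) (Fin n) ℂ),
    eigenvectorUnitary_mul_conjTranspose, Matrix.one_mul]

lemma conjTranspose_eigenOverlap (hA : A.IsHermitian) (hB : B.IsHermitian) :
    (eigenOverlap hA hB)ᴴ = eigenOverlap hB hA := by
  simp [eigenOverlap, conjTranspose_mul]

lemma eigenOverlap_self (hA : A.IsHermitian) : eigenOverlap hA hA = 1 :=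
  conjTranspose_mul_eigenvectorUnitary hA

lemma eigenOverlap_mul_conjTranspose (hA : A.IsHermitian) (hB : B.IsHermitian) :
    eigenOverlap hA hB * (eigenOverlap hA hB)ᴴ = 1 := by
  rw [conjTranspose_eigenOverlap, eigenOverlap_mul_eigenOverlap, eigenOverlap_self]

lemma conjTranspose_mul_eigenOverlap (hA : A.IsHermitian) (hB : B.IsHermitian) :
    (eigenOverlap hA hB)ᴴ * eigenOverlap hA hB = 1 := by
  rw [conjTranspose_eigenOverlap, eigenOverlap_mul_eigenOverlap, eigenOverlap_self]

lemma trRe_cfc_mul_cfc (hA : A.IsHermitian) (hB : B.IsHermitian) (f g : ℝ → ℝ) :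
    trRe (cfc f A * cfc g B) = ∑ i, ∑ j, f (hA.eigenvalues i) * g (hB.eigenvalues j) *
      Complex.normSq (eigenOverlap hA hB i j) := by
  have key : trace (cfc f A * cfc g B) =
      trace (diagonal (fun i => (f (hA.eigenvalues i) : ℂ)) * eigenOverlap hA hB *
        (diagonal (fun j => (g (hB.eigenvalues j) : ℂ)) * (eigenOverlap hA hB)ᴴ)) := by
    rw [hA.cfc_eq, hB.cfc_eq, IsHermitian.cfc, IsHermitian.cfc, Unitary.conjStarAlgAut_apply,
      Unitary.conjStarAlgAut_apply, conjTranspose_eigenOverlap]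
    unfold eigenOverlap
    simp only [Matrix.mul_assoc]
    rw [Matrix.trace_mul_comm]
    simp only [Matrix.mul_assoc]
    rfl
  unfold trRe
  rw [key]
  simp only [trace, diag_apply, Matrix.mul_apply (M := diagonal _ * _), diagonal_mul,
    conjTranspose_apply, Complex.re_sum]
  refine Finset.sum_congr rfl fun i _ => Finset.sum_congr rfl fun j _ => ?_
  simp only [Complex.mul_re, Complex.mul_im, Complex.ofReal_re, Complex.ofReal_im,
    Complex.normSq_apply, RCLike.star_def, Complex.conj_re, Complex.conj_im]
  ring

lemma trRe_cfc (hA : A.IsHermitian) (f : ℝ → ℝ) :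
    trRe (cfc f A) = ∑ i, f (hA.eigenvalues i) := by
  have h := trRe_cfc_mul_cfc hA hA f (fun _ => 1)
  rw [cfc_const_one ℝ A (ha := hA.isSelfAdjoint), Matrix.mul_one, eigenOverlap_self] at h
  simpa [Matrix.one_apply, apply_ite Complex.normSq] using h

/-- The spectral form of `Tr f(A + B)(A + B) = Tr f(A + B) A + Tr f(A + B) B`. -/
lemma sum_mul_eigenvalues_add (hA : A.IsHermitian) (hB : B.IsHermitian) (f : ℝ → ℝ) :
    ∑ i, f ((hA.add hB).eigenvalues i) * (hA.add hB).eigenvalues i =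
      ∑ i, ∑ k, f ((hA.add hB).eigenvalues i) * hA.eigenvalues k *
        Complex.normSq (eigenOverlap (hA.add hB) hA i k) +
      ∑ i, ∑ j, f ((hA.add hB).eigenvalues i) * hB.eigenvalues j *
        Complex.normSq (eigenOverlap (hA.add hB) hB i j) := by
  have hcont : ContinuousOn f (spectrum ℝ (A + B)) := finite_real_spectrum.continuousOn f
  have h1 := trRe_cfc_mul_cfc (hA.add hB) hA f (fun x => x)
  have h2 := trRe_cfc_mul_cfc (hA.add hB) hB f (fun x => x)
  have h3 := trRe_cfc (hA.add hB) (fun x => f x * x)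
  rw [cfc_mul f (fun x => x) (A + B) hcont (by fun_prop), cfc_id' ℝ (A + B)
    (ha := (hA.add hB).isSelfAdjoint)] at h3
  rw [cfc_id' ℝ A (ha := hA.isSelfAdjoint)] at h1
  rw [cfc_id' ℝ B (ha := hB.isSelfAdjoint)] at h2
  rw [← h1, ← h2, ← h3]
  simp [trRe, Matrix.mul_add]

end Eigenbasis

lemma rpow_sub_one_le_young {r w c : ℝ} (hr : r ∈ Set.Ioc (0 : ℝ) 1) (hw : 0 < w) (hc : 0 < c) :
    w ^ (1 / r - 1) ≤ (1 - r) * w ^ (1 / r) / c + r * c ^ (1 / r - 1) := by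
  have hr0 := hr.1
  have h := Real.geom_mean_le_arith_mean2_weighted (sub_nonneg.2 hr.2) hr0.le
    (p₁ := w ^ (1 / r) / c) (p₂ := c ^ (1 / r - 1)) (by positivity) (by positivity) (by ring)
  have e : (w ^ (1 / r) / c) ^ (1 - r) * (c ^ (1 / r - 1)) ^ r = w ^ (1 / r - 1) := by
    rw [Real.div_rpow (by positivity) hc.le, ← Real.rpow_mul hw.le, ← Real.rpow_mul hc.le,
      show 1 / r * (1 - r) = 1 / r - 1 by field_simp, show (1 / r - 1) * r = 1 - r by field_simp]
    field_simp
  rw [e] at h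
  rw [mul_div_assoc]
  exact h

/-- Deformed Golden–Thompson inequality for q ∈ (1,2] and positive semidefinite A, B. -/
theorem stmt16 {n : ℕ} (q : ℝ) (hq : q ∈ Set.Ioc (1 : ℝ) 2)
    (A B : Matrix (Fin n) (Fin n) ℂ) (hA : A.PosSemidef) (hB : B.PosSemidef) :
    trRe (mexpq q (A + B)) ≤ trRe (mexpq q A * mexpq q B) := by
  obtain ⟨r, hr⟩ : ∃ r, r = q - 1 := ⟨_, rfl⟩
  have hr0 : 0 < r := by linarith [hq.1]
  have hr1 : r ≤ 1 := by linarith [hq.2]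
  have hexp : expq q = fun x => (1 + r * x) ^ (1 / r) := by
    ext x
    rw [expq, if_neg (by linarith [hq.1]), hr]
  have hZ := hA.1.add hB.1
  unfold mexpq
  rw [trRe_cfc hZ, trRe_cfc_mul_cfc hA.1 hB.1, hexp]
  dsimp only
  have hα : ∀ k, 0 ≤ hA.1.eigenvalues k := hA.eigenvalues_nonneg
  have hβ : ∀ k, 0 ≤ hB.1.eigenvalues k := hB.eigenvalues_nonneg
  have hγ : ∀ k, 0 ≤ hZ.eigenvalues k := (hA.add hB).eigenvalues_nonneg
  have hid := sum_mul_eigenvalues_add hA.1 hB.1 (fun x => (1 + r * x) ^ (1 / r - 1))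
  set M := eigenOverlap hZ hA.1
  set N := eigenOverlap hA.1 hB.1
  have hMN : eigenOverlap hZ hB.1 = M * N := (eigenOverlap_mul_eigenOverlap _ _ _).symm
  have hM : Mᴴ * M = 1 := conjTranspose_mul_eigenOverlap _ _
  have hM' : M * Mᴴ = 1 := eigenOverlap_mul_conjTranspose _ _
  have hN : N * Nᴴ = 1 := eigenOverlap_mul_conjTranspose _ _
  have hMN' : (M * N) * (M * N)ᴴ = 1 := hMN ▸ eigenOverlap_mul_conjTranspose _ _
  rw [hMN] at hid
  set α := hA.1.eigenvalues
  set β := hB.1.eigenvalues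
  set γ := hZ.eigenvalues
  obtain ⟨z, hz⟩ : ∃ z : Fin n → ℝ, ∀ i, z i = 1 + r * γ i := ⟨_, fun _ => rfl⟩
  obtain ⟨c, hc⟩ : ∃ c : Fin n → ℝ, ∀ i, c i = 1 + r * α i := ⟨_, fun _ => rfl⟩
  obtain ⟨d, hd⟩ : ∃ d : Fin n → ℝ, ∀ i, d i = 1 + r * β i := ⟨_, fun _ => rfl⟩
  simp_rw [← hz, ← hc, ← hd]
  simp_rw [← hz] at hid
  have hz1 : ∀ i, 1 ≤ z i := fun i => by rw [hz]; nlinarith [mul_nonneg hr0.le (hγ i)]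
  have hc1 : ∀ i, 1 ≤ c i := fun i => by rw [hc]; nlinarith [mul_nonneg hr0.le (hα i)]
  have hd1 : ∀ i, 1 ≤ d i := fun i => by rw [hd]; nlinarith [mul_nonneg hr0.le (hβ i)]
  have hz0 : ∀ i, 0 < z i := fun i => one_pos.trans_le (hz1 i)
  have hc0 : ∀ i, 0 < c i := fun i => one_pos.trans_le (hc1 i)
  have hd0 : ∀ i, 0 < d i := fun i => one_pos.trans_le (hd1 i)
  have pz : ∀ v : ℝ, 0 < v → v ^ (1 / r) = v ^ (1 / r - 1) * v := fun v hv => by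
    rw [Real.rpow_sub_one hv.ne']; field_simp
  -- `Tr Z ^ p = Tr Z ^ (p - 1) (C - 1) + Tr Z ^ (p - 1) D`
  have split : ∑ i, z i ^ (1 / r) =
      ∑ i, ∑ k, z i ^ (1 / r - 1) * (c k - 1) * Complex.normSq (M i k) +
        ∑ i, ∑ j, z i ^ (1 / r - 1) * d j * Complex.normSq ((M * N) i j) := by
    have e1 : ∀ i, z i ^ (1 / r) = z i ^ (1 / r - 1) + r * (z i ^ (1 / r - 1) * γ i) := fun i => by
      rw [pz _ (hz0 i)]; nth_rw 2 [hz i]; ring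
    have e2 : ∀ i j, z i ^ (1 / r - 1) * d j * Complex.normSq ((M * N) i j) =
        z i ^ (1 / r - 1) * Complex.normSq ((M * N) i j) +
          r * (z i ^ (1 / r - 1) * β j * Complex.normSq ((M * N) i j)) := fun i j => by
      rw [hd j]; ring
    have e3 : ∀ i k, z i ^ (1 / r - 1) * (c k - 1) * Complex.normSq (M i k) =
        r * (z i ^ (1 / r - 1) * α k * Complex.normSq (M i k)) := fun i j => by
      rw [hc j]; ring
    simp_rw [e1, e2, e3, Finset.sum_add_distrib, ← Finset.mul_sum, hid,
      sum_normSq_row_unitary hMN', mul_one]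
    ring
  have first : ∑ i, ∑ k, z i ^ (1 / r - 1) * (c k - 1) * Complex.normSq (M i k) ≤
      ∑ i, ∑ k, ((1 - r) * z i ^ (1 / r) / c k + r * c k ^ (1 / r - 1)) * (c k - 1) *
        Complex.normSq (M i k) := by
    refine Finset.sum_le_sum fun i _ => Finset.sum_le_sum fun k _ => ?_
    refine mul_le_mul_of_nonneg_right (mul_le_mul_of_nonneg_right ?_ (by linarith [hc1 k]))
      (Complex.normSq_nonneg _)
    exact rpow_sub_one_le_young ⟨hr0, hr1⟩ (hz0 i) (hc0 k)
  have second : ∑ i, ∑ j, z i ^ (1 / r - 1) * d j * Complex.normSq ((M * N) i j) ≤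
      ∑ i, ∑ k, (1 - r) * z i ^ (1 / r) / c k * Complex.normSq (M i k) +
        ∑ k, ∑ j, r * c k ^ (1 / r - 1) * d j ^ (1 / r) * Complex.normSq (N k j) := by
    have h := sum_rpow_mul_rpow_le (s := 1 - r) ⟨by linarith, by linarith⟩ hM hN
      (w := fun i => z i ^ (1 / r)) (x := fun i => c i ^ (1 / r)) (y := fun i => d i ^ (1 / r))
      (fun i => Real.rpow_pos_of_pos (hz0 i) _) (fun i => Real.rpow_pos_of_pos (hc0 i) _)
      (fun i => Real.rpow_pos_of_pos (hd0 i) _)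
    simp_rw [← Real.rpow_mul (hz0 _).le, ← Real.rpow_mul (hc0 _).le, ← Real.rpow_mul (hd0 _).le,
      show 1 / r * (1 - r) = 1 / r - 1 by field_simp,
      show 1 / r * (1 - (1 - r)) = 1 by field_simp; ring,
      show 1 / r * (1 - r - 1) = -1 by field_simp; ring, Real.rpow_one, Real.rpow_neg_one,
      sub_sub_cancel, ← div_eq_mul_inv] at h
    exact h
  have collect : ∑ i, ∑ k, ((1 - r) * z i ^ (1 / r) / c k + r * c k ^ (1 / r - 1)) * (c k - 1) *
        Complex.normSq (M i k) + ∑ i, ∑ k, (1 - r) * z i ^ (1 / r) / c k * Complex.normSq (M i k) =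
      (1 - r) * ∑ i, z i ^ (1 / r) + r * ∑ k, c k ^ (1 / r - 1) * (c k - 1) := by
    have e : ∀ i k, ((1 - r) * z i ^ (1 / r) / c k + r * c k ^ (1 / r - 1)) * (c k - 1) *
        Complex.normSq (M i k) + (1 - r) * z i ^ (1 / r) / c k * Complex.normSq (M i k) =
        (1 - r) * z i ^ (1 / r) * Complex.normSq (M i k) +
          r * (c k ^ (1 / r - 1) * (c k - 1)) * Complex.normSq (M i k) := fun i k => by
      have := hc0 k
      field_simp
      ring
    simp_rw [← Finset.sum_add_distrib, e, Finset.sum_add_distrib]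
    rw [Finset.sum_comm (f := fun i k => r * (c k ^ (1 / r - 1) * (c k - 1)) *
      Complex.normSq (M i k))]
    simp_rw [← Finset.mul_sum, sum_normSq_row_unitary hM', sum_normSq_col_unitary hM, mul_one, Finset.mul_sum]
  have last : ∑ k, c k ^ (1 / r - 1) * (c k - 1) +
      ∑ k, ∑ j, c k ^ (1 / r - 1) * d j ^ (1 / r) * Complex.normSq (N k j) ≤
      ∑ k, ∑ j, c k ^ (1 / r) * d j ^ (1 / r) * Complex.normSq (N k j) := by
    have e : ∀ k, c k ^ (1 / r - 1) * (c k - 1) =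
        ∑ j, c k ^ (1 / r - 1) * (c k - 1) * Complex.normSq (N k j) := fun k => by
      rw [← Finset.mul_sum, sum_normSq_row_unitary hN, mul_one]
    simp_rw [Finset.sum_congr rfl fun k _ => e k, ← Finset.sum_add_distrib]
    refine Finset.sum_le_sum fun k _ => Finset.sum_le_sum fun j _ => ?_
    rw [← add_mul]
    refine mul_le_mul_of_nonneg_right ?_ (Complex.normSq_nonneg _)
    have h1 : 1 ≤ d j ^ (1 / r) := Real.one_le_rpow (hd1 j) (by positivity)
    have h2 : 0 ≤ c k ^ (1 / r - 1) := Real.rpow_nonneg (hc0 k).le _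
    rw [pz _ (hc0 k)]
    nlinarith [mul_nonneg h2 (mul_nonneg (sub_nonneg.2 (hc1 k)) (sub_nonneg.2 h1))]
  have pull : ∑ k, ∑ j, r * c k ^ (1 / r - 1) * d j ^ (1 / r) * Complex.normSq (N k j) =
      r * ∑ k, ∑ j, c k ^ (1 / r - 1) * d j ^ (1 / r) * Complex.normSq (N k j) := by
    simp_rw [Finset.mul_sum, mul_assoc]
  rw [pull] at second
  refine le_trans ?_ last
  refine le_of_mul_le_mul_left ?_ hr0
  linarith
end

section
/- Let q ∈ (1,2], let H be an n×n contraction (H*H ≤ I), and let X and Y be n×n positive definite matrices with I ≤ Y ≤ X in the Loewner order, and set γ = Tr(X). Then S_{H,q}(X | Y) ≥ Tr[H* X^{2−q} H · log_q(Y^{−1/2} X Y^{−1/2})] − Tr(X − Y) − γ · log_q(1 + γ^{−1} Tr(I − H H*)). -/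
open Matrix ComplexOrder

namespace Matrix

variable {m : Type*} [Fintype m] [DecidableEq m]

section FunctionalCalculus

variable {A : Matrix m m ℂ}

/-- The function `f` of a Hermitian matrix, for complex-valued `f`. -/
noncomputable def IsHermitian.fn (hA : A.IsHermitian) (f : ℝ → ℂ) : Matrix m m ℂ :=
  (hA.eigenvectorUnitary : Matrix m m ℂ) * diagonal (f ∘ hA.eigenvalues) *
    (hA.eigenvectorUnitary : Matrix m m ℂ)ᴴ

lemma IsHermitian.fn_mul (hA : A.IsHermitian) (f g : ℝ → ℂ) :
    hA.fn f * hA.fn g = hA.fn (fun x => f x * g x) := by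
  have hU : (hA.eigenvectorUnitary : Matrix m m ℂ)ᴴ * (hA.eigenvectorUnitary : Matrix m m ℂ) = 1 :=
    Unitary.coe_star_mul_self hA.eigenvectorUnitary
  simp only [IsHermitian.fn]
  calc _ = (hA.eigenvectorUnitary : Matrix m m ℂ) * diagonal (f ∘ hA.eigenvalues) *
        ((hA.eigenvectorUnitary : Matrix m m ℂ)ᴴ * (hA.eigenvectorUnitary : Matrix m m ℂ)) *
        diagonal (g ∘ hA.eigenvalues) * (hA.eigenvectorUnitary : Matrix m m ℂ)ᴴ := by
        simp only [Matrix.mul_assoc]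
    _ = _ := by
      rw [hU, Matrix.mul_one, Matrix.mul_assoc _ (diagonal _) (diagonal _), diagonal_mul_diagonal]
      rfl

lemma IsHermitian.fn_conjTranspose (hA : A.IsHermitian) (f : ℝ → ℂ) :
    (hA.fn f)ᴴ = hA.fn (fun x => star (f x)) := by
  simp only [IsHermitian.fn, conjTranspose_mul, conjTranspose_conjTranspose, diagonal_conjTranspose,
    Matrix.mul_assoc]
  rfl

lemma IsHermitian.fn_congr (hA : A.IsHermitian) {f g : ℝ → ℂ}
    (h : ∀ i, f (hA.eigenvalues i) = g (hA.eigenvalues i)) : hA.fn f = hA.fn g := by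
  have : f ∘ hA.eigenvalues = g ∘ hA.eigenvalues := funext h
  simp only [IsHermitian.fn, this]

lemma IsHermitian.cfc_eq_fn (hA : A.IsHermitian) (f : ℝ → ℝ) :
    cfc f A = hA.fn (fun x => (f x : ℂ)) := by
  rw [hA.cfc_eq]
  rfl

lemma IsHermitian.fn_one (hA : A.IsHermitian) : hA.fn (fun _ => 1) = 1 := by
  have : diagonal ((fun _ => (1 : ℂ)) ∘ hA.eigenvalues) = 1 := diagonal_one
  rw [IsHermitian.fn, this, Matrix.mul_one]
  exact Unitary.coe_mul_star_self hA.eigenvectorUnitary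

lemma IsHermitian.fn_id (hA : A.IsHermitian) : hA.fn (fun x => (x : ℂ)) = A := by
  conv_rhs => rw [hA.spectral_theorem]
  rfl

lemma IsHermitian.fn_sub (hA : A.IsHermitian) (f g : ℝ → ℂ) :
    hA.fn f - hA.fn g = hA.fn (fun x => f x - g x) := by
  simp only [IsHermitian.fn, ← Matrix.mul_sub, ← Matrix.sub_mul, diagonal_sub]
  rfl

lemma IsHermitian.fn_smul (hA : A.IsHermitian) (c : ℂ) (f : ℝ → ℂ) :
    c • hA.fn f = hA.fn (fun x => c * f x) := by
  rw [IsHermitian.fn, IsHermitian.fn, ← Matrix.smul_mul, ← Matrix.mul_smul, ← diagonal_smul]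
  rfl

lemma IsHermitian.fn_posSemidef (hA : A.IsHermitian) {f : ℝ → ℝ}
    (h : ∀ i, 0 ≤ f (hA.eigenvalues i)) : (hA.fn (fun x => (f x : ℂ))).PosSemidef := by
  refine PosSemidef.mul_mul_conjTranspose_same (PosSemidef.diagonal ?_) _
  intro i
  exact Complex.zero_le_real.mpr (h i)

/-- A positive semidefinite matrix has a Hermitian square root. -/
lemma PosSemidef.exists_isHermitian_mul_self (hA : A.PosSemidef) :
    ∃ G : Matrix m m ℂ, Gᴴ = G ∧ G * G = A := by
  refine ⟨hA.1.fn (fun x => (√x : ℂ)), ?_, ?_⟩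
  · simp [hA.1.fn_conjTranspose]
  · rw [hA.1.fn_mul]
    conv_rhs => rw [← hA.1.fn_id]
    refine hA.1.fn_congr fun i => ?_
    rw [← Complex.ofReal_mul, Real.mul_self_sqrt (hA.eigenvalues_nonneg i)]

lemma IsHermitian.one_le_eigenvalues (hA : A.IsHermitian) (h : (A - 1).PosSemidef) (i : m) :
    1 ≤ hA.eigenvalues i := by
  have hv := h.dotProduct_mulVec_nonneg (⇑(hA.eigenvectorBasis i))
  have h1 : star (⇑(hA.eigenvectorBasis i)) ⬝ᵥ ⇑(hA.eigenvectorBasis i) = 1 := by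
    have := hA.eigenvectorBasis.orthonormal.1 i
    have h2 := inner_self_eq_norm_sq_to_K (𝕜 := ℂ) (hA.eigenvectorBasis i)
    rw [this, EuclideanSpace.inner_eq_star_dotProduct, dotProduct_comm] at h2
    simpa using h2
  rw [sub_mulVec, hA.mulVec_eigenvectorBasis, one_mulVec, dotProduct_sub, dotProduct_smul, h1] at hv
  have := (Complex.le_def.mp hv).1
  simp at this
  linarith

/-- Complex powers of a positive definite matrix. -/
noncomputable def IsHermitian.cpow (hA : A.IsHermitian) (z : ℂ) : Matrix m m ℂ :=
  hA.fn (fun x => Complex.exp (z * Real.log x))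

lemma IsHermitian.cpow_mul_cpow (hA : A.IsHermitian) (z w : ℂ) :
    hA.cpow z * hA.cpow w = hA.cpow (z + w) := by
  simp only [IsHermitian.cpow, hA.fn_mul, ← Complex.exp_add, add_mul]

lemma IsHermitian.cpow_zero (hA : A.IsHermitian) : hA.cpow 0 = 1 := by
  simp [IsHermitian.cpow, hA.fn_one]

lemma IsHermitian.cpow_conjTranspose (hA : A.IsHermitian) (z : ℂ) :
    (hA.cpow z)ᴴ = hA.cpow (star z) := by
  simp only [IsHermitian.cpow, hA.fn_conjTranspose]
  refine hA.fn_congr fun i => ?_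
  simp [← Complex.exp_conj]

lemma IsHermitian.cpow_conjTranspose_of_re_eq_zero (hA : A.IsHermitian) {z : ℂ} (hz : z.re = 0) :
    (hA.cpow z)ᴴ = hA.cpow (-z) := by
  rw [hA.cpow_conjTranspose]
  congr 1
  apply Complex.ext <;> simp [hz]

lemma PosDef.cpow_ofReal (hA : A.PosDef) (s : ℝ) :
    hA.1.cpow s = cfc (fun x : ℝ => x ^ s) A := by
  rw [hA.1.cfc_eq_fn]
  refine hA.1.fn_congr fun i => ?_
  rw [Real.rpow_def_of_pos (hA.eigenvalues_pos i), mul_comm]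
  push_cast
  rfl

lemma PosDef.cpow_one (hA : A.PosDef) : hA.1.cpow 1 = A := by
  have := hA.cpow_ofReal 1
  simp only [Real.rpow_one, Complex.ofReal_one] at this
  rw [this]
  exact cfc_id' ℝ A hA.1

lemma IsHermitian.cpow_commute_fn (hA : A.IsHermitian) (z : ℂ) (f : ℝ → ℂ) :
    hA.fn f * hA.cpow z = hA.cpow z * hA.fn f := by
  simp only [IsHermitian.cpow, hA.fn_mul, mul_comm]

end FunctionalCalculus

section Contraction

lemma PosSemidef.one_sub_mul {K L : Matrix m m ℂ} (hK : (1 - Kᴴ * K).PosSemidef)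
    (hL : (1 - Lᴴ * L).PosSemidef) : (1 - (K * L)ᴴ * (K * L)).PosSemidef := by
  have h := hL.add (hK.conjTranspose_mul_mul_same L)
  have e : 1 - Lᴴ * L + Lᴴ * (1 - Kᴴ * K) * L = 1 - (K * L)ᴴ * (K * L) := by
    simp only [conjTranspose_mul]
    noncomm_ring
  rwa [e] at h

lemma PosSemidef.one_sub_conjTranspose {K : Matrix m m ℂ} (hK : (1 - Kᴴ * K).PosSemidef) :
    (1 - K * Kᴴ).PosSemidef := by
  let : Invertible (1 : Matrix m m ℂ) := invertibleOne
  have h1 := PosDef.fromBlocks₁₁ (A := (1 : Matrix m m ℂ)) K 1 PosDef.one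
  have h2 := PosDef.fromBlocks₂₂ (D := (1 : Matrix m m ℂ)) 1 K PosDef.one
  simp only [inv_one, Matrix.mul_one] at h1 h2
  exact h2.mp (h1.mpr hK)

lemma posSemidef_one_sub_of_eq_one {V : Matrix m m ℂ} (hV : Vᴴ * V = 1) :
    (1 - Vᴴ * V).PosSemidef := by
  rw [hV, sub_self]
  exact PosSemidef.zero

lemma re_trace_conjTranspose_mul_mul_le {K : Matrix m m ℂ} (hK : (1 - Kᴴ * K).PosSemidef)
    (M N : Matrix m m ℂ) :
    2 * (trace (Mᴴ * K * N)).re ≤ (trace (Mᴴ * M)).re + (trace (Nᴴ * N)).re := by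
  have h1 := (Complex.le_def.mp (posSemidef_conjTranspose_mul_self (M - K * N)).trace_nonneg).1
  have h2 := (Complex.le_def.mp (hK.conjTranspose_mul_mul_same N).trace_nonneg).1
  have e1 : (M - K * N)ᴴ * (M - K * N) =
      Mᴴ * M - Mᴴ * K * N - (Mᴴ * K * N)ᴴ + Nᴴ * Kᴴ * K * N := by
    simp only [conjTranspose_mul, conjTranspose_sub, conjTranspose_conjTranspose]
    noncomm_ring
  have e2 : Nᴴ * (1 - Kᴴ * K) * N = Nᴴ * N - Nᴴ * Kᴴ * K * N := by noncomm_ring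
  rw [e1, trace_add, trace_sub, trace_sub, trace_conjTranspose] at h1
  rw [e2, trace_sub] at h2
  simp at h1 h2
  linarith

lemma norm_trace_mul_mul_le {K V : Matrix m m ℂ} (hK : (1 - Kᴴ * K).PosSemidef)
    (hV : V * Vᴴ = 1) (M : Matrix m m ℂ) :
    ‖trace (Mᴴ * K * M * V)‖ ≤ (trace (Mᴴ * M)).re := by
  obtain ⟨c, hc, hcT⟩ : ∃ c : ℂ, star c * c = 1 ∧
      c * trace (Mᴴ * K * M * V) = ‖trace (Mᴴ * K * M * V)‖ := by
    set T := trace (Mᴴ * K * M * V)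
    by_cases hT : T = 0
    · exact ⟨1, by simp, by simp [hT]⟩
    · have h0 : (‖T‖ : ℂ) ≠ 0 := by simpa using hT
      have h1 : star T * T = (‖T‖ : ℂ) ^ 2 := Complex.conj_mul' T
      refine ⟨star T / ‖T‖, ?_, ?_⟩
      · rw [star_div₀, star_star]
        have : star (‖T‖ : ℂ) = ‖T‖ := Complex.conj_ofReal _
        rw [this, div_mul_div_comm, mul_comm T, h1]
        field_simp
      · rw [div_mul_eq_mul_div, h1]
        field_simp
  have hcK : (1 - (c • K)ᴴ * (c • K)).PosSemidef := by
    rw [conjTranspose_smul, Matrix.smul_mul, Matrix.mul_smul, smul_smul, hc, one_smul]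
    exact hK
  have h := re_trace_conjTranspose_mul_mul_le hcK M (M * V)
  have e1 : Mᴴ * (c • K) * (M * V) = c • (Mᴴ * K * M * V) := by
    simp only [Matrix.smul_mul, Matrix.mul_smul, Matrix.mul_assoc]
  have e2 : trace ((M * V)ᴴ * (M * V)) = trace (Mᴴ * M) := by
    rw [trace_mul_comm, conjTranspose_mul, trace_mul_comm Mᴴ M]
    congr 1
    rw [Matrix.mul_assoc, ← Matrix.mul_assoc V, hV, Matrix.one_mul]
  rw [e1, e2, trace_smul, smul_eq_mul, hcT, Complex.ofReal_re] at h
  linarith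

lemma IsHermitian.cpow_mul_conjTranspose {A : Matrix m m ℂ} (hA : A.IsHermitian) {z : ℂ}
    (hz : z.re = 0) : hA.cpow z * (hA.cpow z)ᴴ = 1 := by
  rw [hA.cpow_conjTranspose_of_re_eq_zero hz, hA.cpow_mul_cpow, add_neg_cancel, hA.cpow_zero]

lemma IsHermitian.posSemidef_one_sub_cpow {A : Matrix m m ℂ} (hA : A.IsHermitian) {z : ℂ}
    (hz : z.re = 0) : (1 - (hA.cpow z)ᴴ * hA.cpow z).PosSemidef := by
  apply posSemidef_one_sub_of_eq_one
  rw [hA.cpow_conjTranspose_of_re_eq_zero hz, hA.cpow_mul_cpow, neg_add_cancel, hA.cpow_zero]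

end Contraction

section Strip

open Complex.HadamardThreeLines

/-- Entire functions that are bounded on the strip `0 ≤ re z ≤ 1`. -/
def StripBounded (f : ℂ → ℂ) : Prop :=
  Differentiable ℂ f ∧ ∃ C, ∀ z ∈ verticalClosedStrip 0 1, ‖f z‖ ≤ C

lemma StripBounded.const (c : ℂ) : StripBounded fun _ => c :=
  ⟨differentiable_const c, ‖c‖, fun _ _ => le_rfl⟩

lemma StripBounded.add {f g : ℂ → ℂ} (hf : StripBounded f) (hg : StripBounded g) :
    StripBounded fun z => f z + g z := by
  obtain ⟨hf, C, hC⟩ := hf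
  obtain ⟨hg, D, hD⟩ := hg
  exact ⟨hf.add hg, C + D, fun z hz => norm_add_le_of_le (hC z hz) (hD z hz)⟩

lemma StripBounded.mul {f g : ℂ → ℂ} (hf : StripBounded f) (hg : StripBounded g) :
    StripBounded fun z => f z * g z := by
  obtain ⟨hf, C, hC⟩ := hf
  obtain ⟨hg, D, hD⟩ := hg
  exact ⟨hf.mul hg, C * D, fun z hz => norm_mul_le_of_le (hC z hz) (hD z hz)⟩

lemma StripBounded.sum {ι : Type*} (s : Finset ι) {f : ι → ℂ → ℂ}
    (hf : ∀ i, StripBounded (f i)) : StripBounded fun z => ∑ i ∈ s, f i z := by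
  classical
  induction s using Finset.induction_on with
  | empty => simpa using StripBounded.const 0
  | insert i s hi ih => simpa [Finset.sum_insert hi] using (hf i).add ih

lemma StripBounded.exp (a b c : ℝ) :
    StripBounded fun z => Complex.exp ((a + b * z) * c) := by
  refine ⟨by fun_prop, Real.exp ((|a| + |b|) * |c|), fun z hz => ?_⟩
  rw [Complex.norm_exp, Real.exp_le_exp]
  have hz' : 0 ≤ z.re ∧ z.re ≤ 1 := hz
  have h : ((a + b * z) * c : ℂ).re = (a + b * z.re) * c := by simp
  rw [h]
  refine (le_abs_self _).trans ?_
  rw [abs_mul]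
  gcongr
  refine (abs_add_le _ _).trans (add_le_add le_rfl ?_)
  rw [abs_mul, abs_of_nonneg hz'.1]
  exact mul_le_of_le_one_right (abs_nonneg b) hz'.2

/-- Matrix-valued functions with entries bounded on the strip. -/
def StripBoundedEntries {ι : Type*} (M : ℂ → Matrix ι ι ℂ) : Prop :=
  ∀ i j, StripBounded fun z => M z i j

lemma StripBoundedEntries.const {ι : Type*} (M : Matrix ι ι ℂ) : StripBoundedEntries fun _ => M :=
  fun i j => StripBounded.const (M i j)

lemma StripBoundedEntries.mul {ι : Type*} [Fintype ι] {M N : ℂ → Matrix ι ι ℂ}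
    (hM : StripBoundedEntries M) (hN : StripBoundedEntries N) :
    StripBoundedEntries fun z => M z * N z := by
  intro i j
  simp only [Matrix.mul_apply]
  exact StripBounded.sum _ fun k => (hM i k).mul (hN k j)

lemma StripBoundedEntries.trace {ι : Type*} [Fintype ι] {M : ℂ → Matrix ι ι ℂ}
    (hM : StripBoundedEntries M) : StripBounded fun z => (M z).trace :=
  StripBounded.sum _ fun i => hM i i

lemma IsHermitian.stripBoundedEntries_cpow {A : Matrix m m ℂ} (hA : A.IsHermitian) (a b : ℝ) :
    StripBoundedEntries fun z => hA.cpow (a + b * z) := by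
  refine ((StripBoundedEntries.const _).mul ?_).mul (StripBoundedEntries.const _)
  intro i j
  by_cases h : i = j
  · subst h
    simpa using StripBounded.exp a b (Real.log (hA.eigenvalues i))
  · simpa [diagonal_apply_ne _ h] using StripBounded.const 0

lemma StripBounded.norm_le {f : ℂ → ℂ} (hf : StripBounded f) {a b s : ℝ} (hs : s ∈ Set.Icc 0 1)
    (ha : ∀ z : ℂ, z.re = 0 → ‖f z‖ ≤ a) (hb : ∀ z : ℂ, z.re = 1 → ‖f z‖ ≤ b) :
    ‖f s‖ ≤ a ^ (1 - s) * b ^ s := by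
  obtain ⟨hd, C, hC⟩ := hf
  have hs' : (s : ℂ) ∈ verticalClosedStrip 0 1 := by simpa [verticalClosedStrip] using hs
  have h := norm_le_interp_of_mem_verticalClosedStrip₀₁' f hs' hd.diffContOnCl
    ⟨C, by rintro _ ⟨z, hz, rfl⟩; exact hC z hz⟩ (fun z hz => ha z hz) (fun z hz => hb z hz)
  simpa using h

end Strip

section Interpolation

variable {X Y Z H P Q : Matrix m m ℂ}

lemma PosDef.norm_trace_cpow_one_sub_mul_le (hX : X.PosDef) {z : ℂ} (hz : z.re = 0)
    {K : Matrix m m ℂ} (hK : (1 - Kᴴ * K).PosSemidef) (L : Matrix m m ℂ) :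
    ‖trace (hX.1.cpow (1 - z) * (Lᴴ * K * L))‖ ≤ (trace (X * (Lᴴ * L))).re := by
  have hh : (hX.1.cpow (1 / 2))ᴴ = hX.1.cpow (1 / 2) := by
    rw [hX.1.cpow_conjTranspose]; simp
  have h := norm_trace_mul_mul_le hK (hX.1.cpow_mul_conjTranspose (z := -z) (by simpa using hz))
    (L * hX.1.cpow (1 / 2))
  have e1 : trace ((L * hX.1.cpow (1 / 2))ᴴ * K * (L * hX.1.cpow (1 / 2)) * hX.1.cpow (-z)) =
      trace (hX.1.cpow (1 - z) * (Lᴴ * K * L)) := by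
    have : hX.1.cpow (1 - z) = hX.1.cpow (1 / 2) * hX.1.cpow (-z) * hX.1.cpow (1 / 2) := by
      rw [hX.1.cpow_mul_cpow, hX.1.cpow_mul_cpow]; congr 1; ring
    calc _ = trace (hX.1.cpow (1 / 2) * (Lᴴ * K * L * hX.1.cpow (1 / 2) * hX.1.cpow (-z))) := by
          rw [conjTranspose_mul, hh]; simp only [Matrix.mul_assoc]
      _ = trace (Lᴴ * K * L * (hX.1.cpow (1 / 2) * hX.1.cpow (-z) * hX.1.cpow (1 / 2))) := by
          rw [trace_mul_comm]; simp only [Matrix.mul_assoc]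
      _ = _ := by rw [← this, trace_mul_comm]
  have e2 : trace ((L * hX.1.cpow (1 / 2))ᴴ * (L * hX.1.cpow (1 / 2))) = trace (X * (Lᴴ * L)) := by
    have : X = hX.1.cpow (1 / 2) * hX.1.cpow (1 / 2) := by
      rw [hX.1.cpow_mul_cpow, add_halves, hX.cpow_one]
    conv_rhs => rw [this]
    rw [conjTranspose_mul, hh, Matrix.mul_assoc, trace_mul_comm]
    simp only [Matrix.mul_assoc]
    rw [← Matrix.mul_assoc Lᴴ, trace_mul_comm]
    simp only [Matrix.mul_assoc]
  rwa [e1, e2] at h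

lemma PosDef.norm_trace_mul_cpow_le (hY : Y.PosDef) (hZ : Z.PosDef) {w : ℂ} (hw : w.re = 0)
    {K R : Matrix m m ℂ} (hK : (1 - Kᴴ * K).PosSemidef) (hR : Rᴴ = R)
    (hRY : ∀ z, R * hY.1.cpow z = hY.1.cpow z * R) :
    ‖trace (K * (R * (hY.1.cpow ((1 + w) / 2) * hZ.1.cpow (1 + w) * hY.1.cpow ((1 + w) / 2)) * R))‖
      ≤ (trace (Z * (Y * (R * R)))).re := by
  have hh : (hZ.1.cpow (1 / 2))ᴴ = hZ.1.cpow (1 / 2) := by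
    rw [hZ.1.cpow_conjTranspose]; simp
  have hh' : (hY.1.cpow (1 / 2))ᴴ = hY.1.cpow (1 / 2) := by
    rw [hY.1.cpow_conjTranspose]; simp
  have hw2 : (w / 2).re = 0 := by simp [hw]
  set M := R * hY.1.cpow (1 / 2) * hZ.1.cpow (1 / 2) with hM
  have h := norm_trace_mul_mul_le (K := hY.1.cpow (w / 2) * K * hY.1.cpow (w / 2))
    (PosSemidef.one_sub_mul (PosSemidef.one_sub_mul (hY.1.posSemidef_one_sub_cpow hw2) hK)
      (hY.1.posSemidef_one_sub_cpow hw2)) (hZ.1.cpow_mul_conjTranspose hw) M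
  have hMh : Mᴴ = hZ.1.cpow (1 / 2) * (hY.1.cpow (1 / 2) * R) := by
    rw [hM, conjTranspose_mul, conjTranspose_mul, hh, hh', hR]
  have e1 : trace (Mᴴ * (hY.1.cpow (w / 2) * K * hY.1.cpow (w / 2)) * M * hZ.1.cpow w) =
      trace (K * (R * (hY.1.cpow ((1 + w) / 2) * hZ.1.cpow (1 + w) *
        hY.1.cpow ((1 + w) / 2)) * R)) := by
    have a1 : hY.1.cpow ((1 + w) / 2) = hY.1.cpow (w / 2) * hY.1.cpow (1 / 2) := by
      rw [hY.1.cpow_mul_cpow]; congr 1; ring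
    have a2 : hY.1.cpow ((1 + w) / 2) = hY.1.cpow (1 / 2) * hY.1.cpow (w / 2) := by
      rw [hY.1.cpow_mul_cpow]; congr 1; ring
    have a3 : hZ.1.cpow (1 + w) = hZ.1.cpow (1 / 2) * hZ.1.cpow w * hZ.1.cpow (1 / 2) := by
      rw [hZ.1.cpow_mul_cpow, hZ.1.cpow_mul_cpow]; congr 1; ring
    have b1 : hY.1.cpow (1 / 2) * R * hY.1.cpow (w / 2) = hY.1.cpow ((1 + w) / 2) * R := by
      rw [Matrix.mul_assoc, hRY, ← Matrix.mul_assoc, ← a2]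
    have b2 : hY.1.cpow (w / 2) * (R * hY.1.cpow (1 / 2)) = R * hY.1.cpow ((1 + w) / 2) := by
      rw [← Matrix.mul_assoc, ← hRY, Matrix.mul_assoc, ← a1]
    calc _ = trace (hZ.1.cpow (1 / 2) * ((hY.1.cpow (1 / 2) * R * hY.1.cpow (w / 2)) * K *
          (hY.1.cpow (w / 2) * (R * hY.1.cpow (1 / 2))) * hZ.1.cpow (1 / 2) * hZ.1.cpow w)) := by
          rw [hMh, hM]; simp only [Matrix.mul_assoc]
      _ = trace ((hY.1.cpow ((1 + w) / 2) * R) * (K * (R * hY.1.cpow ((1 + w) / 2)) *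
          (hZ.1.cpow (1 / 2) * hZ.1.cpow w * hZ.1.cpow (1 / 2)))) := by
          rw [b1, b2, trace_mul_comm]; simp only [Matrix.mul_assoc]
      _ = _ := by
          rw [← a3, trace_mul_comm]; simp only [Matrix.mul_assoc]
  have e2 : trace (Mᴴ * M) = trace (Z * (Y * (R * R))) := by
    have hZ' : hZ.1.cpow (1 / 2) * hZ.1.cpow (1 / 2) = Z := by
      rw [hZ.1.cpow_mul_cpow, add_halves, hZ.cpow_one]
    have hY' : hY.1.cpow (1 / 2) * hY.1.cpow (1 / 2) = Y := by
      rw [hY.1.cpow_mul_cpow, add_halves, hY.cpow_one]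
    have hRR : R * R * hY.1.cpow (1 / 2) = hY.1.cpow (1 / 2) * (R * R) := by
      rw [Matrix.mul_assoc, hRY, ← Matrix.mul_assoc, hRY, Matrix.mul_assoc]
    calc _ = trace (hZ.1.cpow (1 / 2) * (hY.1.cpow (1 / 2) * (R * R * hY.1.cpow (1 / 2)) *
          hZ.1.cpow (1 / 2))) := by
          rw [hMh, hM]; simp only [Matrix.mul_assoc]
      _ = trace ((hY.1.cpow (1 / 2) * hY.1.cpow (1 / 2)) * (R * R) *
          (hZ.1.cpow (1 / 2) * hZ.1.cpow (1 / 2))) := by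
          rw [hRR, trace_mul_comm]; simp only [Matrix.mul_assoc]
      _ = _ := by rw [hZ', hY', trace_mul_comm]
  rwa [e1, e2] at h

/-- A two-term interpolation inequality of Araki–Lieb–Thirring type. -/
theorem PosDef.norm_trace_interpolation_le (hX : X.PosDef) (hY : Y.PosDef) (hZ : Z.PosDef)
    (hH : (1 - Hᴴ * H).PosSemidef) (hP : Pᴴ = P) (hQ : Qᴴ = Q)
    (hPY : ∀ z, P * hY.1.cpow z = hY.1.cpow z * P) (hQY : ∀ z, Q * hY.1.cpow z = hY.1.cpow z * Q)
    (hPQ : P * P + Q * Q = 1) {s : ℝ} (hs : s ∈ Set.Icc (0 : ℝ) 1) :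
    ‖trace (hX.1.cpow (1 - s) * (1 - H * Hᴴ)) +
      (trace (hX.1.cpow (1 - s) * (H * (P * (hY.1.cpow (s / 2) * hZ.1.cpow s *
        hY.1.cpow (s / 2)) * P) * Hᴴ)) +
      trace (hX.1.cpow (1 - s) * (H * (Q * (hY.1.cpow (s / 2) * hZ.1.cpow s *
        hY.1.cpow (s / 2)) * Q) * Hᴴ)))‖ ≤
    (trace X).re ^ (1 - s) * ((trace (1 - H * Hᴴ)).re + (trace (Z * Y)).re) ^ s := by
  have hH' := hH.one_sub_conjTranspose
  obtain ⟨G, hG, hGG⟩ := hH'.exists_isHermitian_mul_self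
  set summand : Matrix m m ℂ → ℂ → ℂ := fun R z =>
    trace (hX.1.cpow (1 - z) * (H * (R * (hY.1.cpow (z / 2) * hZ.1.cpow z *
      hY.1.cpow (z / 2)) * R) * Hᴴ)) with hsummand
  have hXs : StripBoundedEntries fun z => hX.1.cpow (1 - z) := by
    simpa [sub_eq_add_neg] using hX.1.stripBoundedEntries_cpow 1 (-1)
  have hYs : StripBoundedEntries fun z => hY.1.cpow (z / 2) := by
    simpa [div_eq_inv_mul] using hY.1.stripBoundedEntries_cpow 0 (2⁻¹)
  have hZs : StripBoundedEntries fun z => hZ.1.cpow z := by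
    simpa using hZ.1.stripBoundedEntries_cpow 0 1
  have hconst := StripBoundedEntries.const (ι := m)
  have hsummandS : ∀ R, StripBounded (summand R) := fun R =>
    (hXs.mul (((hconst H).mul (((hconst R).mul ((hYs.mul hZs).mul hYs)).mul (hconst R))).mul
      (hconst Hᴴ))).trace
  have hF : StripBounded fun z => trace (hX.1.cpow (1 - z) * (1 - H * Hᴴ)) +
      (summand P z + summand Q z) :=
    (hXs.mul (hconst (1 - H * Hᴴ))).trace.add ((hsummandS P).add (hsummandS Q))
  refine hF.norm_le hs (fun z hz => ?_) (fun z hz => ?_)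
  · have h0 : ‖trace (hX.1.cpow (1 - z) * (1 - H * Hᴴ))‖ ≤
        (trace (X * (1 - H * Hᴴ))).re := by
      have := hX.norm_trace_cpow_one_sub_mul_le hz (K := 1) (by simpa using PosSemidef.zero) G
      rwa [hG, Matrix.mul_one, hGG] at this
    have hR : ∀ R : Matrix m m ℂ, Rᴴ = R → ‖summand R z‖ ≤ (trace (X * (H * (R * R) * Hᴴ))).re := by
      intro R hR
      have hz2 : (z / 2).re = 0 := by simp [hz]
      have := hX.norm_trace_cpow_one_sub_mul_le hz
        (PosSemidef.one_sub_mul (PosSemidef.one_sub_mul (hY.1.posSemidef_one_sub_cpow hz2)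
          (hZ.1.posSemidef_one_sub_cpow hz)) (hY.1.posSemidef_one_sub_cpow hz2)) (R * Hᴴ)
      simpa only [hsummand, conjTranspose_mul, conjTranspose_conjTranspose, hR, Matrix.mul_assoc]
        using this
    have e : trace X = trace (X * (1 - H * Hᴴ)) + (trace (X * (H * (P * P) * Hᴴ)) +
        trace (X * (H * (Q * Q) * Hᴴ))) := by
      rw [← trace_add, ← trace_add, ← Matrix.mul_add, ← Matrix.mul_add, ← Matrix.add_mul,
        ← Matrix.mul_add, hPQ, Matrix.mul_one, sub_add_cancel, Matrix.mul_one]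
    rw [e, Complex.add_re, Complex.add_re]
    exact norm_add_le_of_le h0 (norm_add_le_of_le (hR P hP) (hR Q hQ))
  · obtain ⟨w, hw, rfl⟩ : ∃ w : ℂ, w.re = 0 ∧ z = 1 + w := ⟨z - 1, by simp [hz], by ring⟩
    have hw' : (-w).re = 0 := by simp [hw]
    have e1 : (1 : ℂ) - (1 + w) = -w := by ring
    have h0 : ‖trace (hX.1.cpow (1 - (1 + w)) * (1 - H * Hᴴ))‖ ≤ (trace (1 - H * Hᴴ)).re := by
      have := norm_trace_mul_mul_le (K := 1) (by simpa using PosSemidef.zero)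
        (hX.1.cpow_mul_conjTranspose hw') G
      rw [hG, Matrix.mul_one, hGG, trace_mul_comm] at this
      rwa [e1]
    have hK : (1 - (Hᴴ * hX.1.cpow (-w) * H)ᴴ * (Hᴴ * hX.1.cpow (-w) * H)).PosSemidef :=
      PosSemidef.one_sub_mul (PosSemidef.one_sub_mul (by simpa using hH')
        (hX.1.posSemidef_one_sub_cpow hw')) hH
    have hR : ∀ R : Matrix m m ℂ, Rᴴ = R → (∀ z, R * hY.1.cpow z = hY.1.cpow z * R) →
        ‖summand R (1 + w)‖ ≤ (trace (Z * (Y * (R * R)))).re := by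
      intro R hR hRY
      have := hY.norm_trace_mul_cpow_le hZ hw hK hR hRY
      simp only [hsummand, e1]
      convert this using 2
      rw [← Matrix.mul_assoc, trace_mul_comm]
      simp only [Matrix.mul_assoc]
    have e : trace (Z * Y) = trace (Z * (Y * (P * P))) + trace (Z * (Y * (Q * Q))) := by
      rw [← trace_add, ← Matrix.mul_add, ← Matrix.mul_add, hPQ, Matrix.mul_one]
    rw [e, Complex.add_re]
    exact norm_add_le_of_le h0 (norm_add_le_of_le (hR P hP hPY) (hR Q hQ hQY))

end Interpolation

variable {A B : Matrix m m ℂ}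

lemma PosSemidef.re_trace_mul_nonneg (hA : A.PosSemidef) (hB : B.PosSemidef) :
    0 ≤ (trace (A * B)).re := by
  obtain ⟨G, hG, rfl⟩ := hA.exists_isHermitian_mul_self
  have h := (Complex.le_def.mp (hB.conjTranspose_mul_mul_same G).trace_nonneg).1
  rwa [hG, Matrix.mul_assoc, trace_mul_comm, Matrix.mul_assoc, trace_mul_comm] at h

lemma PosDef.cpow_posSemidef (hA : A.PosDef) (s : ℝ) : (hA.1.cpow s).PosSemidef := by
  rw [hA.cpow_ofReal, hA.1.cfc_eq_fn]
  exact hA.1.fn_posSemidef fun i => Real.rpow_nonneg (hA.eigenvalues_pos i).le s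

lemma PosDef.cpow_sub_one_posSemidef (hA : A.PosDef) (h1 : (A - 1).PosSemidef) {s : ℝ}
    (hs : 0 ≤ s) : (hA.1.cpow s - 1).PosSemidef := by
  have h : (hA.1.fn (fun x => ((x ^ s - 1 : ℝ) : ℂ))).PosSemidef :=
    hA.1.fn_posSemidef fun i =>
      sub_nonneg.mpr (Real.one_le_rpow (hA.1.one_le_eigenvalues h1 i) hs)
  have e : hA.1.cpow s - 1 = hA.1.fn (fun x => ((x ^ s - 1 : ℝ) : ℂ)) := by
    conv_lhs => rw [hA.cpow_ofReal, hA.1.cfc_eq_fn, ← hA.1.fn_one, hA.1.fn_sub]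
    simp
  rwa [e]

/-- For `1 ≤ A`, the matrix `1 - A ^ (-s)` has a square root that is a function of `A`. -/
lemma PosDef.exists_sqrt_one_sub_cpow (hA : A.PosDef) (h1 : (A - 1).PosSemidef) {s : ℝ}
    (hs : 0 ≤ s) : ∃ Q : Matrix m m ℂ, Qᴴ = Q ∧ (∀ z, Q * hA.1.cpow z = hA.1.cpow z * Q) ∧
      Q * Q = 1 - hA.1.cpow (-s) := by
  refine ⟨hA.1.fn (fun x => ((√(1 - x ^ (-s)) : ℝ) : ℂ)), ?_, ?_, ?_⟩
  · simp [hA.1.fn_conjTranspose]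
  · exact fun z => hA.1.cpow_commute_fn z _
  · have e : hA.1.cpow (-s) = hA.1.fn (fun x => ((x ^ (-s) : ℝ) : ℂ)) := by
      rw [← hA.1.cfc_eq_fn, ← hA.cpow_ofReal]
      simp
    rw [e, ← hA.1.fn_one, hA.1.fn_sub, hA.1.fn_mul]
    refine hA.1.fn_congr fun i => ?_
    rw [← Complex.ofReal_mul, Real.mul_self_sqrt]
    · simp
    · exact sub_nonneg.mpr (Real.rpow_le_one_of_one_le_of_nonpos
        (hA.1.one_le_eigenvalues h1 i) (by linarith))

/-- The trace inequality behind the lower bound for the reduced Tsallis relative entropy. -/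
theorem PosDef.re_trace_cpow_mul_le {X Y Z H : Matrix m m ℂ} (hX : X.PosDef) (hY : Y.PosDef)
    (hZ : Z.PosDef) (hY1 : (Y - 1).PosSemidef) (hZ1 : (Z - 1).PosSemidef)
    (hH : (1 - Hᴴ * H).PosSemidef) {s : ℝ} (hs : s ∈ Set.Icc (0 : ℝ) 1) :
    (trace (hX.1.cpow (1 - s) * (1 - H * Hᴴ + H * (hY.1.cpow s + hZ.1.cpow s - 1) * Hᴴ))).re ≤
      (trace X).re ^ (1 - s) * ((trace (1 - H * Hᴴ)).re + (trace (Z * Y)).re) ^ s := by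
  obtain ⟨Q, hQ, hQY, hQQ⟩ := hY.exists_sqrt_one_sub_cpow hY1 hs.1
  have hP : (hY.1.cpow (-(s / 2)))ᴴ = hY.1.cpow (-(s / 2)) := by
    rw [hY.1.cpow_conjTranspose]; simp
  have hPP : hY.1.cpow (-(s / 2)) * hY.1.cpow (-(s / 2)) = hY.1.cpow (-s) := by
    rw [hY.1.cpow_mul_cpow]; congr 1; ring
  have hh : (hY.1.cpow (s / 2))ᴴ = hY.1.cpow (s / 2) := by
    rw [hY.1.cpow_conjTranspose]; simp
  have hle := hX.norm_trace_interpolation_le hY hZ hH hP hQ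
    (fun z => by rw [hY.1.cpow_mul_cpow, hY.1.cpow_mul_cpow, add_comm]) hQY
    (by rw [hPP, hQQ, add_sub_cancel]) hs
  refine le_trans ?_ ((Complex.re_le_norm _).trans hle)
  have hcancel : hY.1.cpow (-(s / 2)) * hY.1.cpow (s / 2) = 1 := by
    rw [hY.1.cpow_mul_cpow, neg_add_cancel, hY.1.cpow_zero]
  have hcancel' : hY.1.cpow (s / 2) * hY.1.cpow (-(s / 2)) = 1 := by
    rw [hY.1.cpow_mul_cpow, add_neg_cancel, hY.1.cpow_zero]
  have eP : hY.1.cpow (-(s / 2)) * (hY.1.cpow (s / 2) * hZ.1.cpow s * hY.1.cpow (s / 2)) *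
      hY.1.cpow (-(s / 2)) = hZ.1.cpow s := by
    rw [Matrix.mul_assoc, Matrix.mul_assoc _ _ (hY.1.cpow (-(s / 2))), hcancel', Matrix.mul_one,
      ← Matrix.mul_assoc, hcancel, Matrix.one_mul]
  set S := Q * hY.1.cpow (s / 2) with hS
  have hSh : Sᴴ = hY.1.cpow (s / 2) * Q := by rw [hS, conjTranspose_mul, hh, hQ]
  have eQ : Q * (hY.1.cpow (s / 2) * hZ.1.cpow s * hY.1.cpow (s / 2)) * Q =
      S * hZ.1.cpow s * Sᴴ := by
    rw [hSh, hS]; simp only [Matrix.mul_assoc]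
  have hSS : S * Sᴴ = hY.1.cpow s - 1 := by
    calc S * Sᴴ = Q * Q * (hY.1.cpow (s / 2) * hY.1.cpow (s / 2)) := by
          rw [hSh, hS, ← hQY, Matrix.mul_assoc, ← Matrix.mul_assoc _ Q, ← hQY]
          simp only [Matrix.mul_assoc]
      _ = _ := by
          rw [hQQ, hY.1.cpow_mul_cpow, add_halves, Matrix.sub_mul, Matrix.one_mul,
            hY.1.cpow_mul_cpow, neg_add_cancel, hY.1.cpow_zero]
  have hpos := PosSemidef.re_trace_mul_nonneg (hX.cpow_posSemidef (1 - s))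
    (((hZ.cpow_sub_one_posSemidef hZ1 hs.1).mul_mul_conjTranspose_same S).mul_mul_conjTranspose_same
      H)
  push_cast at hpos
  have e : hX.1.cpow (1 - s) * (1 - H * Hᴴ) + (hX.1.cpow (1 - s) * (H * hZ.1.cpow s * Hᴴ) +
      hX.1.cpow (1 - s) * (H * (S * hZ.1.cpow s * Sᴴ) * Hᴴ)) =
      hX.1.cpow (1 - s) * (1 - H * Hᴴ + H * (hY.1.cpow s + hZ.1.cpow s - 1) * Hᴴ) +
      hX.1.cpow (1 - s) * (H * (S * (hZ.1.cpow s - 1) * Sᴴ) * Hᴴ) := by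
    have : S * (hZ.1.cpow s - 1) * Sᴴ = S * hZ.1.cpow s * Sᴴ - (hY.1.cpow s - 1) := by
      rw [← hSS]; noncomm_ring
    rw [this]
    noncomm_ring
  rw [eP, eQ, ← trace_add, ← trace_add, e, trace_add, Complex.add_re]
  linarith

end Matrix

lemma Matrix.PosDef.mpow_eq_cpow {n : ℕ} {A : Matrix (Fin n) (Fin n) ℂ} (hA : A.PosDef) (s : ℝ) :
    mpow A s = hA.1.cpow s :=
  (hA.cpow_ofReal s).symm

lemma Matrix.PosDef.mlogq_eq_smul {n : ℕ} {A : Matrix (Fin n) (Fin n) ℂ} (hA : A.PosDef) (q : ℝ) :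
    mlogq q A = ((q - 1 : ℝ) : ℂ)⁻¹ • (hA.1.cpow ((q - 1 : ℝ) : ℂ) - 1) := by
  rw [mlogq, hA.1.cfc_eq_fn]
  conv_rhs => rw [hA.cpow_ofReal, hA.1.cfc_eq_fn, ← hA.1.fn_one, hA.1.fn_sub, hA.1.fn_smul]
  refine hA.1.fn_congr fun i => ?_
  simp [logq, div_eq_inv_mul]

/-- Lower bound for the reduced Tsallis relative entropy when I ≤ Y ≤ X, with γ = Tr X. -/
theorem stmt17 {n : ℕ} (q : ℝ) (hq : q ∈ Set.Ioc (1 : ℝ) 2)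
    (H X Y : Matrix (Fin n) (Fin n) ℂ) (hH : (1 - Hᴴ * H).PosSemidef)
    (hX : X.PosDef) (hY : Y.PosDef)
    (hIY : (Y - 1).PosSemidef) (hYX : (X - Y).PosSemidef) :
    STq H q X Y ≥
      trRe (Hᴴ * mpow X (2 - q) * H
          * mlogq q (mpow Y (-(1 / 2 : ℝ)) * X * mpow Y (-(1 / 2 : ℝ))))
        - trRe (X - Y)
        - trRe X * logq q (1 + (trRe X)⁻¹ * trRe (1 - H * Hᴴ)) := by
  obtain ⟨hq1, hq2⟩ := hq
  rcases Nat.eq_zero_or_pos n with rfl | hn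
  · simp [STq, trRe, trace]
  have : Nonempty (Fin n) := ⟨⟨0, hn⟩⟩
  obtain ⟨p, rfl⟩ : ∃ p, q = 1 + p := ⟨q - 1, by ring⟩
  have hp : 0 < p := by linarith
  have hs : p ∈ Set.Icc (0 : ℝ) 1 := ⟨hp.le, by linarith⟩
  have hγ : 0 < (trace X).re := (Complex.lt_def.mp hX.trace_pos).1
  set Z := mpow Y (-(1 / 2 : ℝ)) * X * mpow Y (-(1 / 2 : ℝ)) with hZdef
  have hC : mpow Y (-(1 / 2 : ℝ)) = hY.1.cpow (-(1 / 2)) := by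
    rw [hY.mpow_eq_cpow]; simp
  have hCh : (hY.1.cpow (-(1 / 2)))ᴴ = hY.1.cpow (-(1 / 2)) := by
    rw [hY.1.cpow_conjTranspose]; simp
  have hCYC : hY.1.cpow (-(1 / 2)) * Y * hY.1.cpow (-(1 / 2)) = 1 := by
    have h : hY.1.cpow (-(1 / 2)) * hY.1.cpow 1 * hY.1.cpow (-(1 / 2)) = 1 := by
      rw [hY.1.cpow_mul_cpow, hY.1.cpow_mul_cpow, ← hY.1.cpow_zero]
      congr 1
      ring
    rwa [hY.cpow_one] at h
  have hZ1 : (Z - 1).PosSemidef := by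
    have h := hYX.conjTranspose_mul_mul_same (hY.1.cpow (-(1 / 2)))
    rwa [hCh, Matrix.mul_sub, Matrix.sub_mul, hCYC, ← hC] at h
  have hZ : Z.PosDef := by
    have h := PosDef.posSemidef_add hZ1 (PosDef.one (n := Fin n) (R := ℂ))
    rwa [sub_add_cancel] at h
  have hZY : trace (Z * Y) = trace X := by
    rw [hZdef, hC, Matrix.mul_assoc, Matrix.mul_assoc, trace_mul_comm, Matrix.mul_assoc, hCYC,
      Matrix.mul_one]
  have key := hX.re_trace_cpow_mul_le hY hZ hIY hZ1 hH hs
  rw [hZY] at key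
  set γ := (trace X).re with hγdef
  set t := (trace (1 - H * Hᴴ)).re with ht
  have ht0 : 0 ≤ t := (Complex.le_def.mp hH.one_sub_conjTranspose.trace_nonneg).1
  have hpow : γ ^ (1 - p) * (t + γ) ^ p = γ * (1 + γ⁻¹ * t) ^ p := by
    have : t + γ = γ * (1 + γ⁻¹ * t) := by field_simp; ring
    rw [this, Real.mul_rpow hγ.le (by positivity), ← mul_assoc, ← Real.rpow_add hγ]
    simp
  rw [hpow] at key
  have hXX : hX.1.cpow (1 - p) * hX.1.cpow p = X := by
    rw [hX.1.cpow_mul_cpow, sub_add_cancel, hX.cpow_one]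
  set D := hX.1.cpow (1 - p) with hD
  have hDm : mpow X (2 - (1 + p)) = D := by
    rw [hX.mpow_eq_cpow, hD]; congr 1; push_cast; ring
  have hsmul : ∀ W : Matrix (Fin n) (Fin n) ℂ,
      trRe ((p : ℂ)⁻¹ • W) = p⁻¹ * trRe W := by
    intro W
    rw [trRe, trace_smul, smul_eq_mul, ← Complex.ofReal_inv, Complex.re_ofReal_mul, trRe]
  have hp1 : (1 + p - 1 : ℝ) = p := by ring
  have hlog : logq (1 + p) (1 + (trRe X)⁻¹ * trRe (1 - H * Hᴴ)) =
      ((1 + γ⁻¹ * t) ^ p - 1) / p := by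
    simp only [logq, hp1]
    rfl
  rw [hlog, STq, hX.mlogq_eq_smul, hY.mlogq_eq_smul, hZ.mlogq_eq_smul, hDm, hp1]
  have tadd : ∀ U V : Matrix (Fin n) (Fin n) ℂ, trRe (U + V) = trRe U + trRe V :=
    fun U V => by simp [trRe]
  have tsub : ∀ U V : Matrix (Fin n) (Fin n) ℂ, trRe (U - V) = trRe U - trRe V :=
    fun U V => by simp [trRe]
  have hcyc : ∀ W : Matrix (Fin n) (Fin n) ℂ,
      trRe (Hᴴ * D * H * W) = trRe (D * (H * W * Hᴴ)) := by
    intro W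
    rw [trRe, trRe, Matrix.mul_assoc, Matrix.mul_assoc, trace_mul_comm]
    simp only [Matrix.mul_assoc]
  have hcyc1 : trRe (Hᴴ * D * H) = trRe (D * (H * Hᴴ)) := by simpa using hcyc 1
  have hX' : trRe X = γ := rfl
  change trRe (D * (1 - H * Hᴴ + H * (hY.1.cpow p + hZ.1.cpow p - 1) * Hᴴ)) ≤ _ at key
  simp only [Matrix.mul_smul, tadd, tsub, hsmul, hcyc, hcyc1, Matrix.mul_sub, Matrix.sub_mul,
    Matrix.mul_add, Matrix.add_mul, Matrix.mul_one, hXX, hX'] at key ⊢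
  rw [ge_iff_le, ← sub_nonneg]
  have hk := mul_le_mul_of_nonneg_left key (inv_nonneg.mpr hp.le)
  rw [div_eq_inv_mul]
  linarith
end

section
/- Let A and B be n×n positive definite matrices, let H be an invertible n×n contraction (H*H ≤ I), let q ∈ [0,2] with q ≠ 1, and let p ≥ |q−1|. Then S_{H,q}(A | B) − (1/(q−1)) Tr[(H H* − I) A^{2−q}] + Tr(A − B) ≤ − Tr[ A · log_q( { A^{−p/2} (H B^{q−1} H*)^{p/(q−1)} A^{−p/2} }^{1/p} ) ]. -/
open Matrix ComplexOrder

namespace Matrix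

variable {n : ℕ}

/-- The real functional calculus commutes with unitary conjugation. -/
theorem cfc_unitary_conj (U : unitary (Matrix (Fin n) (Fin n) ℂ)) {A : Matrix (Fin n) (Fin n) ℂ}
    (hA : A.IsHermitian) (f : ℝ → ℝ) :
    cfc f ((U : Matrix (Fin n) (Fin n) ℂ) * A * star (U : Matrix (Fin n) (Fin n) ℂ)) =
      U * cfc f A * star (U : Matrix (Fin n) (Fin n) ℂ) := by
  have hcont : Continuous (Unitary.conjStarAlgAut ℂ (Matrix (Fin n) (Fin n) ℂ) U) := by
    have : (Unitary.conjStarAlgAut ℂ (Matrix (Fin n) (Fin n) ℂ) U :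
        Matrix (Fin n) (Fin n) ℂ → Matrix (Fin n) (Fin n) ℂ) =
        fun X => (U : Matrix (Fin n) (Fin n) ℂ) * X * star (U : Matrix (Fin n) (Fin n) ℂ) := by
      ext1 X
      exact Unitary.conjStarAlgAut_apply U X
    rw [this]
    fun_prop
  have h := StarAlgHomClass.map_cfc (R := ℝ) (S := ℂ)
    (Unitary.conjStarAlgAut ℂ (Matrix (Fin n) (Fin n) ℂ) U) f A
    ((Matrix.finite_real_spectrum (A := A)).continuousOn f) hcont hA.isSelfAdjoint
    (by rw [Unitary.conjStarAlgAut_apply]; exact hA.isSelfAdjoint.conjugate _)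
  rw [Unitary.conjStarAlgAut_apply, Unitary.conjStarAlgAut_apply] at h
  exact h.symm

theorem cfc_eq_eigenvectorUnitary_mul {A : Matrix (Fin n) (Fin n) ℂ} (hA : A.IsHermitian)
    (f : ℝ → ℝ) :
    cfc f A = (hA.eigenvectorUnitary : Matrix (Fin n) (Fin n) ℂ) *
      diagonal (fun i => ((f (hA.eigenvalues i) : ℝ) : ℂ)) *
      star (hA.eigenvectorUnitary : Matrix (Fin n) (Fin n) ℂ) := by
  rw [hA.cfc_eq, IsHermitian.cfc, Unitary.conjStarAlgAut_apply]
  rfl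

theorem cfc_apply_self_re {A : Matrix (Fin n) (Fin n) ℂ} (hA : A.IsHermitian)
    (f : ℝ → ℝ) (i : Fin n) :
    (cfc f A i i).re = ∑ k, Complex.normSq ((hA.eigenvectorUnitary : Matrix _ _ ℂ) i k) *
      f (hA.eigenvalues k) := by
  rw [cfc_eq_eigenvectorUnitary_mul hA, mul_apply, Complex.re_sum]
  refine Finset.sum_congr rfl fun k _ => ?_
  rw [mul_diagonal, star_apply, mul_right_comm, Complex.star_def, Complex.mul_conj]
  norm_cast

theorem PosDef.spectrum_pos {A : Matrix (Fin n) (Fin n) ℂ} (hA : A.PosDef) {x : ℝ}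
    (hx : x ∈ spectrum ℝ A) : 0 < x := by
  obtain ⟨i, rfl⟩ := hA.1.spectrum_real_eq_range_eigenvalues ▸ hx
  exact hA.eigenvalues_pos i

theorem PosDef.cfc_posDef {A : Matrix (Fin n) (Fin n) ℂ} (hA : A.PosDef) {f : ℝ → ℝ}
    (hf : ∀ x, 0 < x → 0 < f x) : (cfc f A).PosDef := by
  rw [cfc_eq_eigenvectorUnitary_mul hA.1]
  refine (IsUnit.posDef_star_right_conjugate_iff
    (Unitary.toUnits hA.1.eigenvectorUnitary).isUnit).2 (PosDef.diagonal fun i => ?_)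
  exact_mod_cast hf _ (hA.eigenvalues_pos i)

theorem PosDef.mpow {A : Matrix (Fin n) (Fin n) ℂ} (hA : A.PosDef) (x : ℝ) :
    (_root_.mpow A x).PosDef :=
  hA.cfc_posDef fun _ h => Real.rpow_pos_of_pos h x

theorem PosDef.mpow_mul_mpow {A : Matrix (Fin n) (Fin n) ℂ} (hA : A.PosDef) (x y : ℝ) :
    _root_.mpow A x * _root_.mpow A y = _root_.mpow A (x + y) := by
  have hc := fun f : ℝ → ℝ => (finite_real_spectrum (A := A)).continuousOn f
  rw [_root_.mpow, _root_.mpow, ← cfc_mul _ _ A (hc _) (hc _)]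
  exact cfc_congr fun z hz => (Real.rpow_add (hA.spectrum_pos hz) x y).symm

theorem PosDef.mpow_mpow {A : Matrix (Fin n) (Fin n) ℂ} (hA : A.PosDef) (x y : ℝ) :
    _root_.mpow (_root_.mpow A x) y = _root_.mpow A (x * y) := by
  have hfin := finite_real_spectrum (A := A)
  rw [_root_.mpow, _root_.mpow, ← cfc_comp _ _ A hA.1.isSelfAdjoint
    ((hfin.image _).continuousOn _) (hfin.continuousOn _)]
  exact cfc_congr fun z hz => (Real.rpow_mul (hA.spectrum_pos hz).le x y).symm

theorem PosDef.mpow_one {A : Matrix (Fin n) (Fin n) ℂ} (hA : A.PosDef) :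
    _root_.mpow A 1 = A := by
  simp only [_root_.mpow, Real.rpow_one]
  exact cfc_id' ℝ A hA.1.isSelfAdjoint

theorem PosDef.mpow_zero {A : Matrix (Fin n) (Fin n) ℂ} (hA : A.PosDef) :
    _root_.mpow A 0 = 1 := by
  simp only [_root_.mpow, Real.rpow_zero]
  exact cfc_const_one ℝ A hA.1.isSelfAdjoint

theorem PosDef.inv_mpow {A : Matrix (Fin n) (Fin n) ℂ} (hA : A.PosDef) (x : ℝ) :
    (_root_.mpow A x)⁻¹ = _root_.mpow A (-x) :=
  inv_eq_right_inv (by rw [hA.mpow_mul_mpow, add_neg_cancel, hA.mpow_zero])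

theorem PosDef.mlogq_eq {A : Matrix (Fin n) (Fin n) ℂ} (hA : A.PosDef) (q : ℝ) :
    mlogq q A = ((q - 1)⁻¹ : ℝ) • (_root_.mpow A (q - 1) - 1) := by
  have hc := fun f : ℝ → ℝ => (finite_real_spectrum (A := A)).continuousOn f
  rw [← hA.mpow_zero, _root_.mpow, _root_.mpow, ← cfc_sub _ _ A (hc _) (hc _),
    ← cfc_smul _ _ A (hc _)]
  refine cfc_congr fun z _ => ?_
  simp [logq, div_eq_inv_mul]

theorem PosDef.cfc_resolvent {A : Matrix (Fin n) (Fin n) ℂ} (hA : A.PosDef) {c t : ℝ} (hc : 0 < c)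
    (ht : 0 < t) : cfc (fun x : ℝ => (t + c * x)⁻¹) A = (t • 1 + c • A)⁻¹ := by
  have hcont := fun f : ℝ → ℝ => (finite_real_spectrum (A := A)).continuousOn f
  have hlin : t • 1 + c • A = cfc (fun x : ℝ => t + c * x) A := by
    rw [cfc_const_add t _ A (hcont _) hA.1.isSelfAdjoint, cfc_const_mul_id c A hA.1.isSelfAdjoint,
      Algebra.algebraMap_eq_smul_one]
  refine (inv_eq_right_inv ?_).symm
  rw [hlin, ← cfc_mul _ _ A (hcont _) (hcont _)]
  refine (cfc_congr fun z hz => ?_).trans (cfc_const_one ℝ A hA.1.isSelfAdjoint)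
  have := hA.spectrum_pos hz
  exact mul_inv_cancel₀ (by positivity)

/-- Variational lower bound for the diagonal entries of an inverse. -/
theorem PosDef.inv_apply_self_ge {X : Matrix (Fin n) (Fin n) ℂ} (hX : X.PosDef)
    (V : Matrix (Fin n) (Fin n) ℂ) (i : Fin n) :
    2 * (V i i).re - ((Vᴴ * X * V) i i).re ≤ (X⁻¹ i i).re := by
  have hdet : IsUnit X.det := (isUnit_iff_isUnit_det X).1 hX.isUnit
  have hpsd := (hX.inv.posSemidef.conjTranspose_mul_mul_same (1 - X * V)).diag_nonneg (i := i)
  have hexp : (1 - X * V)ᴴ * X⁻¹ * (1 - X * V) = X⁻¹ - V - Vᴴ + Vᴴ * X * V := by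
    rw [conjTranspose_sub, conjTranspose_one, conjTranspose_mul, hX.1.eq]
    simp only [sub_mul, mul_sub, one_mul, mul_one, Matrix.mul_assoc, mul_nonsing_inv _ hdet,
      nonsing_inv_mul_cancel_left _ _ hdet]
    abel
  rw [hexp] at hpsd
  have := (Complex.le_def.1 hpsd).1
  simp only [add_apply, sub_apply, conjTranspose_apply, Complex.star_def, Complex.add_re,
    Complex.sub_re, Complex.conj_re, Complex.zero_re] at this
  linarith

open MeasureTheory in
/-- An inequality between weighted sums of resolvents passes to fractional powers. -/
theorem sum_mul_rpow_le_of_resolvent {ι : Type*} [Fintype ι] {c d v w : ι → ℝ}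
    (hv : ∀ a, 0 ≤ v a) (hw : ∀ a, 0 ≤ w a) {α : ℝ} (hα : α ∈ Set.Ioo (0 : ℝ) 1)
    (h : ∀ t : ℝ, 0 < t → ∑ a, c a * (t⁻¹ - (t + v a)⁻¹) ≤ ∑ a, d a * (t⁻¹ - (t + w a)⁻¹)) :
    ∑ a, c a * v a ^ α ≤ ∑ a, d a * w a ^ α := by
  have hpos := Real.integral_rpowIntegrand₀₁_one_pos hα
  set K := ∫ t in Set.Ioi 0, Real.rpowIntegrand₀₁ α t 1
  have key : ∀ (e u : ι → ℝ), (∀ a, 0 ≤ u a) →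
      ∫ t in Set.Ioi 0, ∑ a, e a * Real.rpowIntegrand₀₁ α t (u a) =
        (∑ a, e a * u a ^ α) * K := by
    intro e u hu
    rw [integral_finsetSum _ fun a _ =>
      (Real.integrableOn_rpowIntegrand₀₁_Ioi hα (hu a)).const_mul (e a), Finset.sum_mul]
    refine Finset.sum_congr rfl fun a _ => ?_
    rw [integral_const_mul, Real.integral_rpowIntegrand₀₁_eq_rpow_mul_const hα (hu a), mul_assoc]
  have hint : ∀ (e u : ι → ℝ), (∀ a, 0 ≤ u a) →
      IntegrableOn (fun t => ∑ a, e a * Real.rpowIntegrand₀₁ α t (u a)) (Set.Ioi 0) :=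
    fun e u hu => integrable_finsetSum _ fun a _ =>
      (Real.integrableOn_rpowIntegrand₀₁_Ioi hα (hu a)).const_mul (e a)
  refine le_of_mul_le_mul_right ?_ hpos
  rw [← key c v hv, ← key d w hw]
  refine setIntegral_mono_on (hint c v hv) (hint d w hw) measurableSet_Ioi fun t ht => ?_
  have := mul_le_mul_of_nonneg_left (h t ht) (Real.rpow_nonneg (le_of_lt ht) α)
  simp only [Finset.mul_sum] at this
  convert this using 2 <;> simp only [Real.rpowIntegrand₀₁] <;> ring

theorem sum_mul_mul_sub_nonneg_of_symm {ι : Type*} [Fintype ι] {s : ι → ι → ℝ} {f g : ι → ℝ}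
    (hsymm : ∀ i j, s i j = s j i) (hs : ∀ i j, 0 ≤ s i j)
    (hfg : ∀ i j, 0 ≤ (f i - f j) * (g i - g j)) :
    0 ≤ ∑ i, ∑ j, f i * s i j * (g i - g j) := by
  have hswap : ∑ i, ∑ j, f i * s i j * (g i - g j) = ∑ i, ∑ j, f j * s i j * (g j - g i) := by
    rw [Finset.sum_comm]
    refine Finset.sum_congr rfl fun i _ => Finset.sum_congr rfl fun j _ => ?_
    rw [hsymm]
  have hnonneg : 0 ≤ ∑ i, ∑ j, f i * s i j * (g i - g j) +
      ∑ i, ∑ j, f j * s i j * (g j - g i) := by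
    rw [← Finset.sum_add_distrib]
    refine Finset.sum_nonneg fun i _ => ?_
    rw [← Finset.sum_add_distrib]
    refine Finset.sum_nonneg fun j _ => ?_
    have := mul_nonneg (hs i j) (hfg i j)
    linarith
  linarith

theorem PosDef.sum_resolvent_le {Z W : Matrix (Fin n) (Fin n) ℂ} (hZ : Z.PosDef) (hW : W.PosDef)
    {d : Fin n → ℝ} (hd : ∀ i, 0 < d i)
    (hWZ : diagonal (fun i => ((√(d i) : ℝ) : ℂ)) * W * diagonal (fun i => ((√(d i) : ℝ) : ℂ)) = Z)
    {γ t : ℝ} (hγ : 1 ≤ γ) (ht : 0 < t) :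
    ∑ i, d i ^ γ * ((t • 1 + (1 : ℝ) • Z)⁻¹ i i).re ≤
      ∑ i, d i ^ γ * ((t • 1 + d i • W)⁻¹ i i).re := by
  have posDef_shift : ∀ {Y : Matrix (Fin n) (Fin n) ℂ} {c : ℝ}, Y.PosDef → 0 < c →
      (t • 1 + c • Y).PosDef := fun hY hc => (PosDef.one.smul ht).add (hY.smul hc)
  set R := (t • (1 : Matrix (Fin n) (Fin n) ℂ) + (1 : ℝ) • Z)⁻¹ with hR
  have hRpos : R.PosDef := (posDef_shift hZ one_pos).inv
  have hRZR : R * Z * R = R - t • (R * R) := by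
    have h1 : R * (t • 1 + (1 : ℝ) • Z) * R = R := by
      rw [nonsing_inv_mul _ ((isUnit_iff_isUnit_det _).1 (posDef_shift hZ one_pos).isUnit), one_mul]
    rw [one_smul, mul_add, add_mul, mul_smul_comm, mul_one, smul_mul_assoc] at h1
    exact eq_sub_of_add_eq' h1
  set S : Matrix (Fin n) (Fin n) ℂ := diagonal (fun i => ((√(d i) : ℝ) : ℂ)) with hS
  have hSS : S * S = diagonal (fun i => ((d i : ℝ) : ℂ)) := by
    rw [hS, diagonal_mul_diagonal]
    congr 1
    ext i
    rw [← Complex.ofReal_mul, Real.mul_self_sqrt (hd i).le]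
  have hSH : Sᴴ = S := by
    rw [hS, diagonal_conjTranspose]
    congr 1
    ext i
    simp
  have hRsymm : ∀ i j, Complex.normSq (R i j) = Complex.normSq (R j i) := fun i j => by
    rw [← hRpos.1.apply, Complex.star_def, Complex.normSq_conj]
  have hRDR : ∀ (i : Fin n) (e : Fin n → ℝ),
      ((R * diagonal (fun j => ((e j : ℝ) : ℂ)) * R) i i).re =
        ∑ j, Complex.normSq (R i j) * e j := by
    intro i e
    rw [mul_apply, Complex.re_sum]
    refine Finset.sum_congr rfl fun j _ => ?_
    rw [mul_diagonal, ← hRpos.1.apply j i, mul_right_comm, Complex.star_def, Complex.mul_conj]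
    norm_cast
  have hbound : ∀ i, (R i i).re + t * ∑ j, Complex.normSq (R i j) * ((d i - d j) / d i) ≤
      ((t • 1 + d i • W)⁻¹ i i).re := by
    intro i
    have hi := hd i
    have hsqrt : √(d i) ≠ 0 := (Real.sqrt_pos.2 hi).ne'
    have h := (posDef_shift hW hi).inv_apply_self_ge ((√(d i))⁻¹ • (S * R)) i
    have hV : ((√(d i))⁻¹ • (S * R)) i i = R i i := by
      rw [smul_apply, hS, diagonal_mul, Complex.real_smul, ← mul_assoc, ← Complex.ofReal_mul,
        inv_mul_cancel₀ hsqrt, Complex.ofReal_one, one_mul]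
    have hquad : ((√(d i))⁻¹ • (S * R))ᴴ * (t • 1 + d i • W) * ((√(d i))⁻¹ • (S * R)) =
        R - t • (R * R) + (t / d i) • (R * diagonal (fun j => ((d j : ℝ) : ℂ)) * R) := by
      have hinv : (√(d i))⁻¹ * (√(d i))⁻¹ = (d i)⁻¹ := by
        rw [← mul_inv, Real.mul_self_sqrt hi.le]
      rw [conjTranspose_smul, conjTranspose_mul, hRpos.1.eq, hSH, star_trivial, smul_mul_assoc,
        smul_mul_assoc, mul_smul_comm, smul_smul, hinv, ← hRZR, ← hWZ, ← hSS]
      simp only [mul_add, add_mul, mul_smul_comm, smul_mul_assoc, smul_add, smul_smul, mul_one,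
        Matrix.mul_assoc]
      rw [inv_mul_cancel₀ hi.ne', one_smul, add_comm, inv_mul_eq_div]
    have hone : R * R = R * diagonal (fun _ => (((1 : ℝ)) : ℂ)) * R := by simp
    rw [hV, hquad] at h
    simp only [add_apply, sub_apply, smul_apply, Complex.add_re, Complex.sub_re,
      Complex.smul_re, smul_eq_mul] at h
    rw [hone, hRDR, hRDR] at h
    have hsum : t * ∑ j, Complex.normSq (R i j) * ((d i - d j) / d i) =
        t * ∑ j, Complex.normSq (R i j) * 1 - t / d i * ∑ j, Complex.normSq (R i j) * d j := by
      simp only [Finset.mul_sum, ← Finset.sum_sub_distrib]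
      refine Finset.sum_congr rfl fun j _ => ?_
      field_simp
    linarith
  have hsym : 0 ≤ ∑ i, ∑ j, d i ^ (γ - 1) * Complex.normSq (R i j) * (d i - d j) := by
    refine sum_mul_mul_sub_nonneg_of_symm hRsymm (fun i j => Complex.normSq_nonneg _)
      fun i j => ?_
    rcases le_total (d i) (d j) with hij | hij
    · exact mul_nonneg_of_nonpos_of_nonpos (sub_nonpos.2
        (Real.rpow_le_rpow (hd i).le hij (sub_nonneg.2 hγ))) (sub_nonpos.2 hij)
    · exact mul_nonneg (sub_nonneg.2
        (Real.rpow_le_rpow (hd j).le hij (sub_nonneg.2 hγ))) (sub_nonneg.2 hij)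
  have hsum : ∑ i, d i ^ γ * (t * ∑ j, Complex.normSq (R i j) * ((d i - d j) / d i)) =
      t * ∑ i, ∑ j, d i ^ (γ - 1) * Complex.normSq (R i j) * (d i - d j) := by
    simp only [Finset.mul_sum]
    refine Finset.sum_congr rfl fun i _ => Finset.sum_congr rfl fun j _ => ?_
    rw [Real.rpow_sub_one (hd i).ne']
    ring
  have htotal := Finset.sum_le_sum fun i (_ : i ∈ Finset.univ) =>
    mul_le_mul_of_nonneg_left (hbound i) (Real.rpow_nonneg (hd i).le γ)
  simp only [mul_add, Finset.sum_add_distrib] at htotal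
  rw [hsum] at htotal
  have := mul_nonneg ht.le hsym
  linarith

theorem PosDef.sum_rpow_mul_mpow_le {Z W : Matrix (Fin n) (Fin n) ℂ} (hZ : Z.PosDef)
    (hW : W.PosDef) {d : Fin n → ℝ} (hd : ∀ i, 0 < d i)
    (hWZ : diagonal (fun i => ((√(d i) : ℝ) : ℂ)) * W * diagonal (fun i => ((√(d i) : ℝ) : ℂ)) = Z)
    {γ α : ℝ} (hγ : 1 ≤ γ) (hα : α ∈ Set.Ioc (0 : ℝ) 1) :
    ∑ i, d i ^ (γ + α) * (_root_.mpow W α i i).re ≤ ∑ i, d i ^ γ * (_root_.mpow Z α i i).re := by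
  rcases hα.2.eq_or_lt with rfl | hα1
  · rw [hW.mpow_one, hZ.mpow_one, ← hWZ]
    refine (Finset.sum_congr rfl fun i _ => ?_).le
    rw [mul_diagonal, diagonal_mul, mul_right_comm, ← Complex.ofReal_mul,
      Real.mul_self_sqrt (hd i).le, Complex.re_ofReal_mul, Real.rpow_add_one (hd i).ne', mul_assoc]
  have cfc_resolvent_sub : ∀ {Y : Matrix (Fin n) (Fin n) ℂ} {c t : ℝ}, Y.PosDef → 0 < c → 0 < t →
      ∀ i, (cfc (fun x : ℝ => t⁻¹ - (t + c * x)⁻¹) Y i i).re =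
        t⁻¹ - ((t • 1 + c • Y)⁻¹ i i).re := by
    intro Y c t hY hc ht i
    have hcont := fun f : ℝ → ℝ => (finite_real_spectrum (A := Y)).continuousOn f
    rw [cfc_sub _ _ Y (hcont _) (hcont _), cfc_const t⁻¹ Y hY.1.isSelfAdjoint, hY.cfc_resolvent hc ht,
      Algebra.algebraMap_eq_smul_one]
    simp
  have h := sum_mul_rpow_le_of_resolvent (ι := Fin n × Fin n)
    (c := fun a => d a.1 ^ γ *
      Complex.normSq ((hW.1.eigenvectorUnitary : Matrix _ _ ℂ) a.1 a.2))
    (d := fun a => d a.1 ^ γ *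
      Complex.normSq ((hZ.1.eigenvectorUnitary : Matrix _ _ ℂ) a.1 a.2))
    (v := fun a => d a.1 * hW.1.eigenvalues a.2) (w := fun a => 1 * hZ.1.eigenvalues a.2)
    (fun a => (mul_pos (hd _) (hW.eigenvalues_pos _)).le)
    (fun a => (mul_pos one_pos (hZ.eigenvalues_pos _)).le) ⟨hα.1, hα1⟩ ?_
  · simp only [Fintype.sum_prod_type, mul_assoc, ← Finset.mul_sum] at h
    convert h using 2 with i _ i _
    · rw [_root_.mpow, cfc_apply_self_re hW.1, Real.rpow_add (hd i), mul_assoc, Finset.mul_sum]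
      congr 1
      refine Finset.sum_congr rfl fun k _ => ?_
      rw [Real.mul_rpow (hd i).le (hW.eigenvalues_pos k).le]
      ring
    · rw [_root_.mpow, cfc_apply_self_re hZ.1]
      simp only [one_mul]
  · intro t ht
    have hWsum := fun i => cfc_apply_self_re hW.1 (fun x : ℝ => t⁻¹ - (t + d i * x)⁻¹) i
    have hZsum := cfc_apply_self_re hZ.1 (fun x : ℝ => t⁻¹ - (t + 1 * x)⁻¹)
    simp only [Fintype.sum_prod_type, mul_assoc, ← Finset.mul_sum, ← hWsum, ← hZsum]
    simp only [cfc_resolvent_sub hW (hd _) ht, cfc_resolvent_sub hZ one_pos ht, mul_sub,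
      Finset.sum_sub_distrib]
    exact sub_le_sub_left (hZ.sum_resolvent_le hW hd hWZ hγ ht) _

theorem PosDef.diagonal_mul_mul_diagonal {Z : Matrix (Fin n) (Fin n) ℂ} (hZ : Z.PosDef)
    {e : Fin n → ℝ} (he : ∀ i, 0 < e i) :
    (diagonal (fun i => ((e i : ℝ) : ℂ)) * Z * diagonal (fun i => ((e i : ℝ) : ℂ))).PosDef := by
  have hdiag : (diagonal (fun i => ((e i : ℝ) : ℂ))).PosDef :=
    PosDef.diagonal fun i => by exact_mod_cast he i
  have h := (IsUnit.posDef_star_right_conjugate_iff hdiag.isUnit).2 hZ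
  rwa [star_eq_conjTranspose, hdiag.1.eq] at h

theorem PosDef.sum_rpow_mul_mpow_iterate_le {Z : Matrix (Fin n) (Fin n) ℂ} (hZ : Z.PosDef)
    {d : Fin n → ℝ} (hd : ∀ i, 0 < d i) {α β h : ℝ} (hα : α ∈ Set.Ioc (0 : ℝ) 1) (hh : 0 < h)
    (hβ : h ≤ β) (k : ℕ) :
    ∑ i, d i ^ (β + k * h * α) * (_root_.mpow
      (diagonal (fun i => ((d i ^ (-(k * h / 2)) : ℝ) : ℂ)) * Z *
        diagonal (fun i => ((d i ^ (-(k * h / 2)) : ℝ) : ℂ))) α i i).re ≤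
      ∑ i, d i ^ β * (_root_.mpow Z α i i).re := by
  induction k with
  | zero => simp
  | succ k ih =>
    refine le_trans ?_ ih
    have hpos := fun s : ℝ =>
      hZ.diagonal_mul_mul_diagonal (e := fun i => d i ^ s) fun i => Real.rpow_pos_of_pos (hd i) s
    have hstep := (hpos (-(k * h / 2))).sum_rpow_mul_mpow_le (hpos (-((k + 1 : ℕ) * h / 2)))
      (d := fun i => d i ^ h) (γ := (β + k * h * α) / h)
      (fun i => Real.rpow_pos_of_pos (hd i) h) ?_ ?_ hα
    · have hleft : h * ((β + k * h * α) / h + α) = β + (k + 1 : ℕ) * h * α := by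
        rw [mul_add, mul_div_cancel₀ _ hh.ne']
        push_cast
        ring
      simp only [← Real.rpow_mul (hd _).le] at hstep
      rwa [hleft, mul_div_cancel₀ _ hh.ne'] at hstep
    · have hshift : ∀ i, √(d i ^ h) * d i ^ (-((k + 1 : ℕ) * h / 2)) = d i ^ (-(k * h / 2)) := by
        intro i
        rw [Real.sqrt_eq_rpow, ← Real.rpow_mul (hd i).le, ← Real.rpow_add (hd i)]
        congr 1
        push_cast
        ring
      ext i j
      simp only [mul_diagonal, diagonal_mul, ← hshift]
      push_cast
      ring
    · rw [le_div_iff₀ hh, one_mul]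
      have := hα.1
      have : 0 ≤ k * h * α := by positivity
      linarith

open Filter Topology in
theorem PosDef.sum_rpow_add_mul_mpow_le {Z : Matrix (Fin n) (Fin n) ℂ} (hZ : Z.PosDef)
    {d : Fin n → ℝ} (hd : ∀ i, 0 < d i) {α β : ℝ} (hα : α ∈ Set.Ioc (0 : ℝ) 1) (hβ : 0 ≤ β) :
    ∑ i, d i ^ (β + α) * (_root_.mpow
      (diagonal (fun i => ((d i ^ (-(1 / 2) : ℝ) : ℝ) : ℂ)) * Z *
        diagonal (fun i => ((d i ^ (-(1 / 2) : ℝ) : ℝ) : ℂ))) α i i).re ≤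
      ∑ i, d i ^ β * (_root_.mpow Z α i i).re := by
  set Y := diagonal (fun i => ((d i ^ (-(1 / 2) : ℝ) : ℝ) : ℂ)) * Z *
    diagonal (fun i => ((d i ^ (-(1 / 2) : ℝ) : ℝ) : ℂ)) with hY
  have hpos : ∀ b : ℝ, 0 < b → ∑ i, d i ^ (b + α) * (_root_.mpow Y α i i).re ≤
      ∑ i, d i ^ b * (_root_.mpow Z α i i).re := by
    intro b hb
    obtain ⟨k, hk⟩ := exists_nat_one_div_lt hb
    have hne : (k + 1 : ℝ) ≠ 0 := by positivity
    have h := hZ.sum_rpow_mul_mpow_iterate_le hd hα (h := 1 / (k + 1)) (by positivity) hk.le (k + 1)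
    push_cast at h
    simpa only [mul_one_div_cancel hne, one_mul, ← hY] using h
  have hcont : ∀ (c : ℝ) (y : Fin n → ℝ),
      Continuous fun b : ℝ => ∑ i, d i ^ (b + c) * y i := fun c y =>
    continuous_finsetSum _ fun i _ =>
      ((Real.continuous_const_rpow (hd i).ne').comp (continuous_id.add_const c)).mul_const _
  have hZc := hcont 0 fun i => (_root_.mpow Z α i i).re
  simp only [add_zero] at hZc
  refine le_of_tendsto_of_tendsto (b := 𝓝[>] β)
    ((hcont α fun i => (_root_.mpow Y α i i).re).tendsto β |>.mono_left nhdsWithin_le_nhds)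
    (hZc.tendsto β |>.mono_left nhdsWithin_le_nhds) ?_
  filter_upwards [self_mem_nhdsWithin] with b hb
  exact hpos b (hβ.trans_lt hb)

theorem trRe_unitary_conj_mul (U : unitary (Matrix (Fin n) (Fin n) ℂ)) (e : Fin n → ℝ)
    (Y : Matrix (Fin n) (Fin n) ℂ) :
    trRe ((U : Matrix (Fin n) (Fin n) ℂ) * diagonal (fun i => ((e i : ℝ) : ℂ)) *
      star (U : Matrix (Fin n) (Fin n) ℂ) *
      ((U : Matrix (Fin n) (Fin n) ℂ) * Y * star (U : Matrix (Fin n) (Fin n) ℂ))) =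
      ∑ i, e i * (Y i i).re := by
  have hU := Unitary.coe_star_mul_self U
  have hprod : (U : Matrix (Fin n) (Fin n) ℂ) * diagonal (fun i => ((e i : ℝ) : ℂ)) *
      star (U : Matrix (Fin n) (Fin n) ℂ) *
      ((U : Matrix (Fin n) (Fin n) ℂ) * Y * star (U : Matrix (Fin n) (Fin n) ℂ)) =
      (U : Matrix (Fin n) (Fin n) ℂ) * (diagonal (fun i => ((e i : ℝ) : ℂ)) * Y) *
      star (U : Matrix (Fin n) (Fin n) ℂ) := by
    simp only [Matrix.mul_assoc]
    rw [← Matrix.mul_assoc (star (U : Matrix (Fin n) (Fin n) ℂ))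
      (U : Matrix (Fin n) (Fin n) ℂ), hU, Matrix.one_mul]
  rw [hprod, trRe, trace_mul_comm, ← Matrix.mul_assoc, hU, Matrix.one_mul, trace, Complex.re_sum]
  simp [diagonal_mul]

/-- A trace inequality of Araki–Lieb–Thirring type with weights. -/
theorem PosDef.trRe_mpow_mul_mpow_le {A Z : Matrix (Fin n) (Fin n) ℂ} (hA : A.PosDef)
    (hZ : Z.PosDef) {α β : ℝ} (p : ℝ) (hα : α ∈ Set.Ioc (0 : ℝ) 1) (hβ : 0 ≤ β) :
    trRe (_root_.mpow A (p * (β + α)) *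
      _root_.mpow (_root_.mpow A (-(p / 2)) * Z * _root_.mpow A (-(p / 2))) α) ≤
      trRe (_root_.mpow A (p * β) * _root_.mpow Z α) := by
  set U := hA.1.eigenvectorUnitary
  set a := hA.1.eigenvalues
  have ha : ∀ i, 0 < a i := hA.eigenvalues_pos
  set Y := star (U : Matrix (Fin n) (Fin n) ℂ) * Z * U with hYdef
  have hU : (U : Matrix (Fin n) (Fin n) ℂ) * star (U : Matrix (Fin n) (Fin n) ℂ) = 1 :=
    Unitary.coe_mul_star_self U
  have hU' : star (U : Matrix (Fin n) (Fin n) ℂ) * (U : Matrix (Fin n) (Fin n) ℂ) = 1 :=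
    Unitary.coe_star_mul_self U
  have hY : Y.PosDef := (IsUnit.posDef_star_left_conjugate_iff (Unitary.toUnits U).isUnit).2 hZ
  have hZY : Z = U * Y * star (U : Matrix (Fin n) (Fin n) ℂ) := by
    rw [hYdef, ← Matrix.mul_assoc, ← Matrix.mul_assoc, hU, Matrix.one_mul, Matrix.mul_assoc, hU,
      Matrix.mul_one]
  have hpow : ∀ x : ℝ, _root_.mpow A x = U * diagonal (fun i => ((a i ^ x : ℝ) : ℂ)) *
      star (U : Matrix (Fin n) (Fin n) ℂ) := fun x => cfc_eq_eigenvectorUnitary_mul hA.1 _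
  set E := diagonal (fun i => ((a i ^ (-(p / 2)) : ℝ) : ℂ)) with hE
  have hEYE : (E * Y * E).PosDef :=
    hY.diagonal_mul_mul_diagonal fun i => Real.rpow_pos_of_pos (ha i) _
  have hconj : _root_.mpow A (-(p / 2)) * Z * _root_.mpow A (-(p / 2)) =
      U * (E * Y * E) * star (U : Matrix (Fin n) (Fin n) ℂ) := by
    rw [hpow, hZY, ← hE]
    simp only [Matrix.mul_assoc]
    simp only [← Matrix.mul_assoc (star (U : Matrix (Fin n) (Fin n) ℂ))
      (U : Matrix (Fin n) (Fin n) ℂ), hU', Matrix.one_mul]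
  have h := hY.sum_rpow_add_mul_mpow_le (d := fun i => a i ^ p)
    (fun i => Real.rpow_pos_of_pos (ha i) p) hα hβ
  simp only [← Real.rpow_mul (ha _).le] at h
  rw [show p * -(1 / 2) = -(p / 2) by ring, ← hE] at h
  rw [hconj, hZY, hpow, hpow, _root_.mpow, _root_.mpow, cfc_unitary_conj U hEYE.1,
    cfc_unitary_conj U hY.1, trRe_unitary_conj_mul, trRe_unitary_conj_mul]
  exact h

end Matrix

section trRe

variable {n : ℕ} (X Y : Matrix (Fin n) (Fin n) ℂ)

theorem trRe_add : trRe (X + Y) = trRe X + trRe Y := by simp [trRe]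

theorem trRe_sub : trRe (X - Y) = trRe X - trRe Y := by simp [trRe]

theorem trRe_smul (c : ℝ) : trRe (c • X) = c * trRe X := by simp [trRe]

theorem trRe_mul_comm : trRe (X * Y) = trRe (Y * X) := by rw [trRe, trRe, trace_mul_comm]

end trRe

theorem STq_sub_add_eq {n : ℕ} {A B : Matrix (Fin n) (Fin n) ℂ} (hA : A.PosDef) (hB : B.PosDef)
    (H : Matrix (Fin n) (Fin n) ℂ) (q : ℝ) :
    STq H q A B - (1 / (q - 1)) * trRe ((H * Hᴴ - 1) * mpow A (2 - q)) + trRe (A - B) =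
      (q - 1)⁻¹ * (trRe A - trRe (mpow A (2 - q) * (H * mpow B (q - 1) * Hᴴ))) := by
  have hcyc : ∀ X : Matrix (Fin n) (Fin n) ℂ,
      trRe (Hᴴ * mpow A (2 - q) * H * X) = trRe (mpow A (2 - q) * (H * X * Hᴴ)) := by
    intro X
    rw [Matrix.mul_assoc, Matrix.mul_assoc, trRe_mul_comm]
    simp only [Matrix.mul_assoc]
  have hone := hcyc 1
  rw [Matrix.mul_one, Matrix.mul_one] at hone
  rw [STq, hA.mlogq_eq, hB.mlogq_eq]
  simp only [mul_smul_comm, mul_sub, sub_mul, mul_one, one_mul, trRe_add, trRe_sub, trRe_smul]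
  rw [hA.mpow_mul_mpow, show 2 - q + (q - 1) = 1 by ring, hA.mpow_one, hcyc, hone,
    trRe_mul_comm (H * Hᴴ)]
  ring

theorem neg_trRe_mul_mlogq {n : ℕ} {Y : Matrix (Fin n) (Fin n) ℂ} (hY : Y.PosDef)
    (A : Matrix (Fin n) (Fin n) ℂ) (p q : ℝ) :
    - trRe (A * mlogq q (mpow Y (1 / p))) =
      (q - 1)⁻¹ * (trRe A - trRe (A * mpow Y ((q - 1) / p))) := by
  rw [(hY.mpow _).mlogq_eq, hY.mpow_mpow, one_div_mul_eq_div]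
  simp only [mul_smul_comm, mul_sub, mul_one, trRe_sub, trRe_smul]
  ring

/-- Upper bound for the reduced Tsallis relative entropy. -/
theorem stmt18 {n : ℕ} (A B H : Matrix (Fin n) (Fin n) ℂ)
    (hA : A.PosDef) (hB : B.PosDef) (hH : (1 - Hᴴ * H).PosSemidef) (hHinv : IsUnit H)
    (q : ℝ) (hq : q ∈ Set.Icc (0 : ℝ) 2) (hq1 : q ≠ 1) (p : ℝ) (hp : |q - 1| ≤ p) :
    STq H q A B - (1 / (q - 1)) * trRe ((H * Hᴴ - 1) * mpow A (2 - q)) + trRe (A - B)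
      ≤ - trRe (A * mlogq q
          (mpow (mpow A (-(p / 2)) * mpow (H * mpow B (q - 1) * Hᴴ) (p / (q - 1))
                  * mpow A (-(p / 2))) (1 / p))) := by
  have hr0 : q - 1 ≠ 0 := sub_ne_zero.2 hq1
  have hp0 : 0 < p := (abs_pos.2 hr0).trans_le hp
  have hp0' : p ≠ 0 := hp0.ne'
  set G := H * mpow B (q - 1) * Hᴴ with hGdef
  have hG : G.PosDef := (Matrix.IsUnit.posDef_star_right_conjugate_iff hHinv).2 (hB.mpow _)
  have hY : (mpow A (-(p / 2)) * mpow G (p / (q - 1)) * mpow A (-(p / 2))).PosDef := by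
    have h := (Matrix.IsUnit.posDef_star_right_conjugate_iff (hA.mpow (-(p / 2))).isUnit).2
      (hG.mpow (p / (q - 1)))
    rwa [Matrix.star_eq_conjTranspose, (hA.mpow _).1.eq] at h
  rw [STq_sub_add_eq hA hB, neg_trRe_mul_mlogq hY, ← hGdef]
  rcases hr0.lt_or_gt with hneg | hpos
  · refine mul_le_mul_of_nonpos_left (sub_le_sub_left ?_ _) (inv_nonpos.2 hneg.le)
    set Y := mpow A (-(p / 2)) * mpow G (p / (q - 1)) * mpow A (-(p / 2)) with hYdef
    have hα : -(q - 1) / p ∈ Set.Ioc (0 : ℝ) 1 :=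
      ⟨div_pos (neg_pos.2 hneg) hp0, (div_le_one hp0).2 ((neg_le_abs _).trans hp)⟩
    have h := hA.trRe_mpow_mul_mpow_le (hY.mpow (-1)) p hα (one_div_pos.2 hp0).le
    have hinv : mpow A (-(p / 2)) * mpow Y (-1) * mpow A (-(p / 2)) =
        mpow G (-(p / (q - 1))) := by
      rw [← hY.inv_mpow, hY.mpow_one, hYdef, Matrix.mul_inv_rev, Matrix.mul_inv_rev,
        hA.inv_mpow, hG.inv_mpow, neg_neg]
      simp only [← Matrix.mul_assoc]
      rw [hA.mpow_mul_mpow, neg_add_cancel, hA.mpow_zero, Matrix.one_mul, Matrix.mul_assoc,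
        hA.mpow_mul_mpow, add_neg_cancel, hA.mpow_zero, Matrix.mul_one]
    rw [hinv, hG.mpow_mpow, hY.mpow_mpow, mul_one_div_cancel hp0', hA.mpow_one,
      show -(p / (q - 1)) * (-(q - 1) / p) = 1 by field_simp, hG.mpow_one,
      show p * (1 / p + -(q - 1) / p) = 2 - q by field_simp; ring,
      show -1 * (-(q - 1) / p) = (q - 1) / p by ring] at h
    exact h
  · refine mul_le_mul_of_nonneg_left (sub_le_sub_left ?_ _) (inv_nonneg.2 hpos.le)
    have hα : (q - 1) / p ∈ Set.Ioc (0 : ℝ) 1 :=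
      ⟨div_pos hpos hp0, (div_le_one hp0).2 ((le_abs_self _).trans hp)⟩
    have h := hA.trRe_mpow_mul_mpow_le (hG.mpow (p / (q - 1))) p hα
      (div_nonneg (sub_nonneg.2 hq.2) hp0.le)
    rw [hG.mpow_mpow, div_mul_div_cancel₀ hr0, div_self hp0', hG.mpow_one, mul_div_cancel₀ _ hp0',
      show p * ((2 - q) / p + (q - 1) / p) = 1 by field_simp; ring, hA.mpow_one] at h
    exact h
end
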